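/- arXiv:2101.12327 — 3 statements merged into one kernel-verified Lean document; each statement's English description precedes it below -/
import Mathlib

section
/- Let n and k be integers with n ≥ k ≥ 4, and assume that n ≥ 5 or k ≥ 5. Then S_k(n) = 2^{t_{k-1}(n)}, and the Turán graph T_{k-1}(n) is the unique n-vertex graph G with S_k(G) = 2^{t_{k-1}(n)} (i.e., the unique 𝓢_k-extremal graph on n vertices). -/
open scoped Classical

noncomputable section

universe u

variable {V : Type u}

/-- An orientation of a simple graph `G`: a relation choosing exactly one
direction for each edge of `G`. -/
abbrev SimpleGraph.Orient (G : SimpleGraph V) : Type u :=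
  {D : V → V → Prop // (∀ u v, D u v → G.Adj u v) ∧ ∀ u v, G.Adj u v → (D u v ↔ ¬ D v u)}

/-- A family of tournaments: for each `k`, a set of orientations of the
complete graph on `k` vertices. -/
abbrev TournFamily : Type :=
  ∀ k : ℕ, Set ((⊤ : SimpleGraph (Fin k)).Orient)

/-- The orientation `D` of `G` contains a copy of the `k`-vertex tournament `T`. -/
def ContainsCopy {G : SimpleGraph V} (D : G.Orient) {k : ℕ}
    (T : (⊤ : SimpleGraph (Fin k)).Orient) : Prop :=
  ∃ φ : Fin k → V, Function.Injective φ ∧ ∀ i j, T.1 i j → D.1 (φ i) (φ j)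

/-- The orientation `D` is `F`-free: it contains no copy of a member of `F`. -/
def FreeOrient {G : SimpleGraph V} (F : TournFamily) (D : G.Orient) : Prop :=
  ∀ (k : ℕ) (T : (⊤ : SimpleGraph (Fin k)).Orient), T ∈ F k → ¬ ContainsCopy D T

/-- `D(G, F)`: the number of `F`-free orientations of the graph `G`. -/
def numOrient (G : SimpleGraph V) (F : TournFamily) : ℕ :=
  Nat.card {D : G.Orient // FreeOrient F D}

/-- `D(n, F)`: the maximum of `D(G, F)` over all `n`-vertex graphs `G`. -/
def maxOrient (n : ℕ) (F : TournFamily) : ℕ :=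
  sSup (Set.range fun G : SimpleGraph (Fin n) => numOrient G F)

/-- A tournament is strongly connected if there is a directed path between
every ordered pair of vertices. -/
def IsStrongTourn {k : ℕ} (T : (⊤ : SimpleGraph (Fin k)).Orient) : Prop :=
  ∀ u v : Fin k, Relation.ReflTransGen T.1 u v

/-- `𝓢 k`: the family of strongly connected tournaments on `k` vertices. -/
def SFam (k : ℕ) : TournFamily := fun m => {T | m = k ∧ IsStrongTourn T}

/-- `t r n`: the number of edges of the `r`-partite Turán graph on `n` vertices. -/
def turanNum (r n : ℕ) : ℕ := (SimpleGraph.turanGraph n r).edgeFinset.card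

/-!
In a graph without `k`-cliques every orientation is free, so Turán's theorem settles that case. Any
other graph has strictly fewer than `2 ^ t_{k-1}(n)` free orientations, by induction on `n`: take a
maximal clique `W` with at least `k` vertices and remove it. In a tournament on a clique of `j`
vertices follow a Hamiltonian path. Once a new vertex `y` joined to the whole clique points to some
vertex of the path, it must point to every vertex `k - 2` or more steps further on, since an arc
back would close a strong tournament on at least `k` vertices. This leaves at most
`(j + 4 - k) * 2 ^ (k - 3)` ways to attach `y`, and `(j + 3 - k) * 2 ^ (k - 3)` if `y` misses a
vertex of the clique, as every `y ∉ W` does. The increments of `t_{k-1}` beat these factors unless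
`W` is small. The remaining cliques are counted by splitting their tournaments according to the
largest strong set, because a vertex attached to a strong `S` with `#S ≥ k - 1` has only two free
extensions: it points to all of `S` or to none of it.

For `k = 4` the induction has to pass through four-vertex sets, on which `K₄` has up to `40 > 2 ^ 5`
free orientations.
-/

section TuranNumbers

lemma turanNum_eq_choose_two {r n : ℕ} (h : n ≤ r) : turanNum r n = n.choose 2 := by
  have htop : SimpleGraph.turanGraph n r = ⊤ := SimpleGraph.turanGraph_eq_top.2 (.inr h)
  unfold turanNum
  convert SimpleGraph.card_edgeFinset_top_eq_card_choose_two (V := Fin n)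
  simp

lemma turanNum_add_self (r n : ℕ) :
    turanNum r (n + r) = turanNum r n + n * (r - 1) + r.choose 2 := by
  convert SimpleGraph.card_edgeFinset_turanGraph_add (n := n) (r := r) using 2 <;> simp [turanNum]

lemma turanNum_succ_self {r : ℕ} (hr : r ≠ 0) : turanNum r (r + 1) + 1 = (r + 1).choose 2 := by
  obtain ⟨s, rfl⟩ := Nat.exists_eq_add_one_of_ne_zero hr
  rw [add_comm (s + 1) 1, turanNum_add_self, turanNum_eq_choose_two (by omega), add_comm 1 (s + 1),
    Nat.choose_succ_succ' (s + 1) 1, Nat.choose_one_right, Nat.choose_eq_zero_of_lt one_lt_two]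
  simp only [Nat.reduceAdd, Nat.add_sub_cancel]
  omega

lemma two_mul_choose_two_add_self (n : ℕ) : 2 * n.choose 2 + n = n ^ 2 := by
  induction n with
  | zero => rfl
  | succ n ih =>
    rw [Nat.choose_succ_succ', Nat.choose_one_right]
    linear_combination ih

lemma two_mul_mul_turanNum_add {r : ℕ} (hr : r ≠ 0) (n : ℕ) :
    2 * r * turanNum r n + n % r * (r - n % r) = (r - 1) * n ^ 2 := by
  obtain ⟨s, rfl⟩ := Nat.exists_eq_add_one_of_ne_zero hr
  rw [Nat.add_sub_cancel]
  induction n using Nat.strong_induction_on with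
  | _ n ih =>
    rcases lt_or_ge n (s + 1) with hn | hn
    · obtain ⟨c, rfl⟩ := Nat.exists_eq_add_of_le (Nat.lt_succ_iff.1 hn)
      rw [turanNum_eq_choose_two hn.le, Nat.mod_eq_of_lt hn,
        Nat.sub_eq_of_eq_add' (add_assoc n c 1)]
      linear_combination (n + c + 1) * two_mul_choose_two_add_self n
    · obtain ⟨m, rfl⟩ := Nat.exists_eq_add_of_le' hn
      rw [turanNum_add_self, Nat.add_mod_right, Nat.add_sub_cancel]
      linear_combination ih m (by omega) + (s + 1) * two_mul_choose_two_add_self (s + 1)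

lemma mod_mul_sub_mod_add_le {r : ℕ} (hr : r ≠ 0) (m n : ℕ) :
    (m + n) % r * (r - (m + n) % r) ≤ m % r * (r - m % r) + n % r * (r - n % r) := by
  have ha := Nat.mod_lt m hr.bot_lt
  have hb := Nat.mod_lt n hr.bot_lt
  rw [Nat.add_mod]
  generalize m % r = a at *
  generalize n % r = b at *
  rcases lt_or_ge (a + b) r with hab | hab
  · rw [Nat.mod_eq_of_lt hab, add_mul]
    gcongr <;> omega
  · rw [Nat.mod_eq_sub_mod hab, Nat.mod_eq_of_lt (by omega)]
    zify [hab, ha.le, hb.le, show a + b - r ≤ r by omega]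
    nlinarith

lemma mul_turanNum_add_le {r : ℕ} (hr : r ≠ 0) (m n : ℕ) :
    r * turanNum r m + r * turanNum r n + (r - 1) * (m * n) ≤ r * turanNum r (m + n) := by
  have hm := two_mul_mul_turanNum_add hr m
  have hn := two_mul_mul_turanNum_add hr n
  have hmn := two_mul_mul_turanNum_add hr (m + n)
  have := mod_mul_sub_mod_add_le hr m n
  linarith

lemma exists_turanNum_add_eq {r : ℕ} (hr : r ≠ 0) (m n : ℕ) :
    ∃ c, turanNum r (m + n) = turanNum r m + turanNum r n + c ∧ (r - 1) * (m * n) ≤ r * c := by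
  have h := mul_turanNum_add_le hr m n
  have hle : turanNum r m + turanNum r n ≤ turanNum r (m + n) :=
    Nat.le_of_mul_le_mul_left ((mul_add _ _ _).trans_le (Nat.le_of_add_right_le h)) hr.bot_lt
  obtain ⟨c, hc⟩ := Nat.exists_eq_add_of_le hle
  refine ⟨c, hc, ?_⟩
  rw [hc] at h
  linarith

end TuranNumbers

section Numerics

lemma le_two_pow_of_pow_le {x r e c : ℕ} (hr : r ≠ 0) (hx : x ^ r ≤ 2 ^ e) (he : e ≤ r * c) :
    x ≤ 2 ^ c := by
  refine le_of_pow_le_pow_left₀ hr (by positivity) (hx.trans ?_)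
  rw [← pow_mul, mul_comm]
  exact Nat.pow_le_pow_right two_pos he

lemma add_three_pow_three_le {j : ℕ} (hj : 2 ≤ j) : (j + 3) ^ 3 ≤ 2 * (j + 2) ^ 3 := by
  obtain ⟨i, rfl⟩ := Nat.exists_eq_add_of_le hj
  linarith [pow_pos (i.succ_pos) 3, Nat.zero_le (i ^ 2), Nat.zero_le i]

lemma two_mul_add_two_pow_three_le {j : ℕ} (hj : 2 ≤ j) :
    2 * (j + 2) ^ 3 ≤ 2 ^ (2 * j + 3) := by
  induction j, hj using Nat.le_induction with
  | base => norm_num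
  | succ j hj ih =>
    have hpos := Nat.zero_le ((j + 2) ^ 3)
    calc 2 * (j + 1 + 2) ^ 3 ≤ 4 * (2 * (j + 2) ^ 3) := by linarith [add_three_pow_three_le hj]
      _ ≤ 4 * 2 ^ (2 * j + 3) := by gcongr
      _ = 2 ^ (2 * (j + 1) + 3) := by ring

lemma add_two_pow_three_le {j : ℕ} (hj : 1 ≤ j) : (j + 2) ^ 3 ≤ 2 ^ (2 * j + 3) := by
  obtain rfl | hj := hj.eq_or_lt
  · norm_num
  · linarith [two_mul_add_two_pow_three_le hj, Nat.zero_le ((j + 2) ^ 3)]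

lemma mul_two_pow_pow_le {r j x : ℕ} (hr : 3 ≤ r) (hx : x ^ 3 ≤ 2 ^ (2 * j + 3)) :
    (x * 2 ^ (r - 2)) ^ r ≤ 2 ^ ((r - 1) * (r + j)) := by
  obtain ⟨s, rfl⟩ := Nat.exists_eq_add_of_le' hr
  have hx' : x ≤ 2 ^ (j + 1) := le_two_pow_of_pow_le three_ne_zero hx (by omega)
  simp only [Nat.add_one_sub_one, Nat.reduceSubDiff]
  calc (x * 2 ^ (s + 1)) ^ (s + 3) = x ^ 3 * x ^ s * (2 ^ (s + 1)) ^ (s + 3) := by ring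
    _ ≤ 2 ^ (2 * j + 3) * (2 ^ (j + 1)) ^ s * (2 ^ (s + 1)) ^ (s + 3) := by gcongr
    _ = 2 ^ ((s + 2) * (s + 3 + j)) := by
      rw [← pow_mul, ← pow_mul, ← pow_add, ← pow_add]
      ring_nf

lemma add_three_mul_two_pow_le {r j c : ℕ} (hr : 3 ≤ r) (hj : 1 ≤ j)
    (hc : (r - 1) * (r + j) ≤ r * c) : (j + 3) * 2 ^ (r - 2) ≤ 2 ^ c := by
  obtain rfl | hj := hj.eq_or_lt
  · obtain ⟨s, rfl⟩ := Nat.exists_eq_add_of_le' hr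
    have hrc : s + 3 ≤ c := by
      simp only [Nat.add_one_sub_one] at hc
      by_contra!
      nlinarith
    calc (1 + 3) * 2 ^ (s + 3 - 2) = 2 ^ (s + 3) := by
          rw [show s + 3 - 2 = s + 1 by omega]
          ring
      _ ≤ 2 ^ c := Nat.pow_le_pow_right two_pos hrc
  · exact le_two_pow_of_pow_le (by omega) (mul_two_pow_pow_le hr
      ((add_three_pow_three_le hj).trans (two_mul_add_two_pow_three_le hj))) hc

lemma add_two_mul_two_pow_pow_le {r j m c : ℕ} (hr : 3 ≤ r) (hj : 1 ≤ j)
    (hc : (r - 1) * (m * (r + j)) ≤ r * c) : ((j + 2) * 2 ^ (r - 2)) ^ m ≤ 2 ^ c := by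
  refine le_two_pow_of_pow_le (r := r) (e := (r - 1) * (r + j) * m) (by omega) ?_
    (by rwa [mul_assoc, mul_comm (r + j)])
  rw [pow_right_comm, pow_mul]
  exact Nat.pow_le_pow_left (mul_two_pow_pow_le hr (add_two_pow_three_le hj)) m

lemma forty_mul_pow_four_le {j c : ℕ} (hj : 2 ≤ j) (hc : 8 * (3 + j) ≤ 3 * c) :
    40 * ((j + 2) * 2) ^ 4 ≤ 2 ^ (5 + c) := by
  refine le_two_pow_of_pow_le (e := 8 * j + 36) three_ne_zero ?_ (by omega)
  calc (40 * ((j + 2) * 2) ^ 4) ^ 3 = 1000 * 2 ^ 14 * (2 * (j + 2) ^ 3) ^ 4 := by ring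
    _ ≤ 2 ^ 10 * 2 ^ 14 * (2 ^ (2 * j + 3)) ^ 4 := by
      gcongr
      · norm_num
      · exact two_mul_add_two_pow_three_le hj
    _ = 2 ^ (8 * j + 36) := by ring

lemma seven_mul_six_pow_lt {m c : ℕ} (hm : m ≠ 0) (hc : 8 * m ≤ 3 * c) :
    7 * 6 ^ (m - 1) < 2 ^ c := by
  induction m using Nat.strong_induction_on generalizing c with
  | _ m ih =>
    rcases le_or_gt m 3 with h | h
    · calc 7 * 6 ^ (m - 1) < 2 ^ ((8 * m + 2) / 3) := by interval_cases m <;> simp_all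
        _ ≤ 2 ^ c := Nat.pow_le_pow_right two_pos (by omega)
    · obtain ⟨i, rfl⟩ := Nat.exists_eq_add_of_lt h
      obtain ⟨d, rfl⟩ := Nat.exists_eq_add_of_le' (by omega : 8 ≤ c)
      have := ih (i + 1) (by omega) (by omega) (c := d) (by omega)
      rw [show 3 + i + 1 - 1 = i + 3 by omega, pow_add, pow_add]
      rw [Nat.add_sub_cancel] at this
      omega

end Numerics

section StrongSets

open Relation

/-- The restriction of a relation to the pairs inside a finite set. -/
def restrictOn (D : V → V → Prop) (A : Finset V) : V → V → Prop :=
  fun u v ↦ D u v ∧ u ∈ A ∧ v ∈ A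

/-- A digraph `D` is strongly connected on `S` if every vertex of `S` is reachable from every other
one by a directed path inside `S`. -/
def IsStrongOn (D : V → V → Prop) (S : Finset V) : Prop :=
  ∀ u ∈ S, ∀ v ∈ S, ReflTransGen (restrictOn D S) u v

/-- A digraph `D` induces a tournament on `S`; loops are not excluded. -/
def IsTournOn (D : V → V → Prop) (S : Finset V) : Prop :=
  (S : Set V).Pairwise fun u v ↦ (D u v ↔ ¬ D v u)

variable {D : V → V → Prop} {A B S T : Finset V} {u v y a b : V}

lemma restrictOn_restrictOn (h : A ⊆ B) : restrictOn (restrictOn D B) A = restrictOn D A := by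
  ext u v
  grind [restrictOn]

lemma isStrongOn_restrictOn (h : S ⊆ A) : IsStrongOn (restrictOn D A) S ↔ IsStrongOn D S := by
  simp only [IsStrongOn, restrictOn_restrictOn h]

lemma swap_restrictOn : Function.swap (restrictOn D A) = restrictOn (Function.swap D) A := by
  ext u v
  grind [restrictOn]

lemma isStrongOn_swap : IsStrongOn (Function.swap D) S ↔ IsStrongOn D S := by
  simp only [IsStrongOn, ← swap_restrictOn, reflTransGen_swap]
  exact ⟨fun h u hu v hv ↦ h v hv u hu, fun h u hu v hv ↦ h v hv u hu⟩

lemma reflTransGen_restrictOn_mono (h : S ⊆ T) (huv : ReflTransGen (restrictOn D S) u v) :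
    ReflTransGen (restrictOn D T) u v :=
  ReflTransGen.mono (fun _ _ h' ↦ ⟨h'.1, h h'.2.1, h h'.2.2⟩) _ _ huv

lemma isStrongOn_of_reachable (y : V) (hfrom : ∀ v ∈ S, ReflTransGen (restrictOn D S) y v)
    (hto : ∀ u ∈ S, ReflTransGen (restrictOn D S) u y) : IsStrongOn D S :=
  fun u hu v hv ↦ (hto u hu).trans (hfrom v hv)

lemma IsStrongOn.insert_of_arcs (hS : IsStrongOn D S) (ha : a ∈ S) (hb : b ∈ S) (hya : D y a)
    (hby : D b y) : IsStrongOn D (insert y S) := by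
  have hsub := Finset.subset_insert y S
  have hy := Finset.mem_insert_self y S
  have hS' : ∀ u ∈ S, ∀ v ∈ S, ReflTransGen (restrictOn D (insert y S)) u v :=
    fun u hu v hv ↦ reflTransGen_restrictOn_mono hsub (hS u hu v hv)
  refine isStrongOn_of_reachable y ?_ ?_ <;> simp only [Finset.forall_mem_insert]
  · exact ⟨.refl, fun v hv ↦ .head ⟨hya, hy, hsub ha⟩ (hS' a ha v hv)⟩
  · exact ⟨.refl, fun u hu ↦ .tail (hS' u hu b hb) ⟨hby, hsub hb, hy⟩⟩

lemma isStrongOn_insert_insert (hS : S.Nonempty) (ha : ∀ s ∈ S, D a s) (hb : ∀ s ∈ S, D s b)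
    (hba : D b a) : IsStrongOn D (insert a (insert b S)) := by
  have hma : a ∈ insert a (insert b S) := by simp
  have hmb : b ∈ insert a (insert b S) := by simp
  have has : ∀ s ∈ S, restrictOn D (insert a (insert b S)) a s := fun s hs ↦ ⟨ha s hs, by simp [hs]⟩
  have hsb : ∀ s ∈ S, restrictOn D (insert a (insert b S)) s b := fun s hs ↦ ⟨hb s hs, by simp [hs]⟩
  have hab : restrictOn D (insert a (insert b S)) b a := ⟨hba, hmb, hma⟩
  obtain ⟨s, hs⟩ := hS
  refine isStrongOn_of_reachable a ?_ ?_ <;> simp only [Finset.forall_mem_insert]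
  · exact ⟨.refl, .tail (.single (has s hs)) (hsb s hs), fun v hv ↦ .single (has v hv)⟩
  · exact ⟨.refl, .single hab, fun u hu ↦ .head (hsb u hu) (.single hab)⟩

lemma isStrongOn_insert_toFinset {l : List V} (hl : l.IsChain D) (hne : l ≠ [])
    (hhead : D y (l.head hne)) (hlast : D (l.getLast hne) y) :
    IsStrongOn D (insert y l.toFinset) := by
  have hmem : ∀ {v}, v ∈ l → v ∈ insert y l.toFinset := by simp +contextual
  have hy : y ∈ insert y l.toFinset := Finset.mem_insert_self _ _
  have hl' : l.IsChain (restrictOn D (insert y l.toFinset)) :=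
    hl.imp_of_mem_imp fun u v hu hv huv ↦ ⟨huv, hmem hu, hmem hv⟩
  refine isStrongOn_of_reachable y ?_ ?_ <;>
    simp only [Finset.forall_mem_insert, List.mem_toFinset]
  · refine ⟨.refl, hl'.induction _ l (fun u v huv hu ↦ hu.tail huv) fun h ↦ ?_⟩
    exact .single ⟨hhead, hy, hmem (List.head_mem h)⟩
  · refine ⟨.refl, hl'.backwards_induction _ l (fun u v huv hv ↦ hv.head huv) fun h ↦ ?_⟩
    exact .single ⟨hlast, hmem (List.getLast_mem h), hy⟩

lemma IsStrongOn.exists_arc (hS : IsStrongOn D S) (p : V → Prop) (hu : u ∈ S) (hv : v ∈ S)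
    (hpu : p u) (hpv : ¬ p v) : ∃ a ∈ S, ∃ b ∈ S, p a ∧ ¬ p b ∧ D a b := by
  induction hS u hu v hv with
  | refl => exact absurd hpu hpv
  | @tail b c _ hbc ih =>
    by_cases hpb : p b
    · exact ⟨b, hbc.2.1, c, hbc.2.2, hpb, hpv, hbc.1⟩
    · exact ih hbc.2.1 hpb

lemma IsTournOn.mono (hD : IsTournOn D B) (h : A ⊆ B) : IsTournOn D A :=
  Set.Pairwise.mono (Finset.coe_subset.2 h) hD

-- In the second case, `T` with one vertex replaced by `a` and `b` is strong of size `#T + 1`.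
lemma IsStrongOn.exists_grow (hS : IsStrongOn D S) (hD : IsTournOn D S) (hTS : T ⊂ S)
    (hT : T.Nonempty) :
    (∃ v ∈ S, v ∉ T ∧ ∃ a ∈ T, ∃ b ∈ T, D v a ∧ D b v) ∨
    ∃ a ∈ S, ∃ b ∈ S, a ∉ T ∧ b ∉ T ∧ a ≠ b ∧ (∀ t ∈ T, D a t) ∧ (∀ t ∈ T, D t b) ∧ D b a := by
  rw [or_iff_not_imp_left]
  push Not
  intro hmixed
  have hsub := hTS.subset
  obtain ⟨x, hxS, hxT⟩ := Finset.exists_of_ssubset hTS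
  obtain ⟨t, ht⟩ := hT
  have hto : ∀ v ∈ S, v ∉ T → (∃ s ∈ T, D s v) → ∀ s ∈ T, D s v := by
    rintro v hv hvT ⟨r, hr, hrv⟩ s hs
    have := hD (hsub hs) hv (by rintro rfl; exact hvT hs)
    exact this.2 fun hvs ↦ hmixed v hv hvT s hs r hr hvs hrv
  obtain ⟨r, -, v, hv, hrT, hvT, hrv⟩ := hS.exists_arc (· ∈ T) (hsub ht) hxS ht hxT
  obtain ⟨b, hb, a, ha, ⟨hbT, htb⟩, hna, hba⟩ :=
    hS.exists_arc (fun w ↦ w ∉ T ∧ ∀ s ∈ T, D s w) hv (hsub ht) ⟨hvT, hto v hv hvT ⟨r, hrT, hrv⟩⟩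
      fun h ↦ h.1 ht
  have hne : a ≠ b := by rintro rfl; exact hna ⟨hbT, htb⟩
  have haT : a ∉ T := fun h ↦ (hD ha hb hne).1 (htb a h) hba
  refine ⟨a, ha, b, hb, haT, hbT, hne, fun s hs ↦ ?_, htb, hba⟩
  exact (hD ha (hsub hs) (by rintro rfl; exact haT hs)).2
    fun hsa ↦ hna ⟨haT, hto a ha haT ⟨s, hs, hsa⟩⟩

lemma IsStrongOn.exists_subset_card_eq (hS : IsStrongOn D S) (hD : IsTournOn D S) {j : ℕ}
    (hj : 3 ≤ j) (hjS : j ≤ S.card) : ∃ T ⊆ S, T.card = j ∧ IsStrongOn D T := by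
  induction j, hj using Nat.le_induction with
  | base =>
    obtain ⟨v, hv⟩ : S.Nonempty := Finset.card_pos.1 (by omega)
    have hvS : {v} ⊂ S := by
      refine (Finset.singleton_subset_iff.2 hv).ssubset_of_ne ?_
      rintro rfl
      simp at hjS
    rcases hS.exists_grow hD hvS (Finset.singleton_nonempty v) with
      ⟨w, hw, hwv, a, ha, b, hb, hwa, hbw⟩ | ⟨a, ha, b, hb, hav, hbv, hab, hav', hvb, hba⟩
    · rw [Finset.mem_singleton] at ha hb hwv
      subst ha hb
      exact absurd hbw ((hD hw hv hwv).1 hwa)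
    · refine ⟨insert a (insert b {v}), ?_, ?_, isStrongOn_insert_insert (by simp) hav' hvb hba⟩
      · simp [Finset.insert_subset_iff, ha, hb, hv]
      · rw [Finset.card_insert_of_notMem (by grind), Finset.card_insert_of_notMem hbv,
          Finset.card_singleton]
  | succ j hj ih =>
    obtain ⟨T, hTS, rfl, hT⟩ := ih (by omega)
    have hss : T ⊂ S := hTS.ssubset_of_ne (by rintro rfl; omega)
    obtain ⟨t, ht⟩ : T.Nonempty := Finset.card_pos.1 (by omega)
    rcases hS.exists_grow hD hss ⟨t, ht⟩ with
      ⟨w, hw, hwT, a, ha, b, hb, hwa, hbw⟩ | ⟨a, ha, b, hb, haT, hbT, hab, haT', hTb, hba⟩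
    · exact ⟨insert w T, Finset.insert_subset hw hTS, Finset.card_insert_of_notMem hwT,
        hT.insert_of_arcs ha hb hwa hbw⟩
    · refine ⟨insert a (insert b (T.erase t)), by grind, ?_, isStrongOn_insert_insert ?_
        (fun s hs ↦ haT' s (Finset.mem_of_mem_erase hs))
        (fun s hs ↦ hTb s (Finset.mem_of_mem_erase hs)) hba⟩
      · rw [Finset.card_insert_of_notMem (by grind), Finset.card_insert_of_notMem (by grind),
          Finset.card_erase_add_one ht]
      · exact Finset.card_pos.1 (by rw [Finset.card_erase_of_mem ht]; omega)

lemma exists_perm_cons_isChain {l : List V} (hl : l.IsChain D) (hy : ∀ x ∈ l, D y x ∨ D x y) :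
    ∃ l' : List V, l'.Perm (y :: l) ∧ l'.IsChain D := by
  have hsplit := l.takeWhile_append_dropWhile (p := fun x ↦ decide (D x y))
  set l₁ := l.takeWhile fun x ↦ decide (D x y)
  set l₂ := l.dropWhile fun x ↦ decide (D x y) with hl₂
  refine ⟨l₁ ++ y :: l₂, hsplit ▸ List.perm_middle, ?_⟩
  rw [← hsplit, List.isChain_append] at hl
  rw [List.isChain_append, List.isChain_cons]
  refine ⟨hl.1, ⟨fun x hx ↦ ?_, hl.2.1⟩, fun x hx z hz ↦ ?_⟩
  · have hxl : x ∈ l := (List.dropWhile_suffix _).subset (List.mem_of_mem_head? hx)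
    have := List.head?_dropWhile_not (fun x ↦ decide (D x y)) l
    rw [← hl₂, hx] at this
    exact (hy x hxl).resolve_right (by simpa using this)
  · have := List.mem_takeWhile_imp (List.mem_of_mem_getLast? hx)
    simp_all

lemma IsTournOn.exists_isChain (hD : IsTournOn D A) :
    ∃ l : List V, l.Nodup ∧ l.toFinset = A ∧ l.IsChain D := by
  induction A using Finset.induction_on with
  | empty => exact ⟨[], by simp⟩
  | insert y A hy ih =>
    obtain ⟨l, hnd, rfl, hl⟩ := ih (hD.mono (Finset.subset_insert _ _))
    rw [List.mem_toFinset] at hy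
    have htot : ∀ x ∈ l, D y x ∨ D x y := fun x hx ↦ by
      have := hD (x := y) (y := x) (by simp) (by simp [hx]) (by rintro rfl; exact hy hx)
      tauto
    obtain ⟨l', hperm, hl'⟩ := exists_perm_cons_isChain hl htot
    refine ⟨l', hperm.nodup_iff.2 (List.nodup_cons.2 ⟨hy, hnd⟩), ?_, hl'⟩
    rw [List.toFinset_eq_of_perm _ _ hperm, List.toFinset_cons]

end StrongSets

section FreeOrientations

/-- `D` is an orientation of the subgraph of `G` induced by `A`, as a relation on the whole vertex
type which relates vertices of `A` only. -/
structure IsOrientationOn (G : SimpleGraph V) (A : Finset V) (D : V → V → Prop) : Prop where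
  adj_and_mem : ∀ u v, D u v → G.Adj u v ∧ u ∈ A ∧ v ∈ A
  iff_not : ∀ u ∈ A, ∀ v ∈ A, G.Adj u v → (D u v ↔ ¬ D v u)

variable {G : SimpleGraph V} {j k : ℕ} {A B S W : Finset V} {D E : V → V → Prop} {y : V}

lemma IsOrientationOn.isTournOn (hD : IsOrientationOn G A D) (hS : S ⊆ A)
    (hcl : G.IsClique (S : Set V)) : IsTournOn D S :=
  fun u hu v hv huv ↦ hD.iff_not u (hS hu) v (hS hv) (hcl hu hv huv)

lemma IsOrientationOn.restrictOn (hD : IsOrientationOn G B D) (h : A ⊆ B) :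
    IsOrientationOn G A (restrictOn D A) where
  adj_and_mem u v huv := ⟨(hD.adj_and_mem u v huv.1).1, huv.2⟩
  iff_not u hu v hv huv := by
    simpa [_root_.restrictOn, hu, hv] using hD.iff_not u (h hu) v (h hv) huv

lemma IsOrientationOn.eq_of_forall (hD : IsOrientationOn G A D) (hE : IsOrientationOn G A E)
    (h : ∀ u ∈ A, ∀ v ∈ A, G.Adj u v → (D u v ↔ E u v) ∨ (D v u ↔ E v u)) : D = E := by
  have hiff : ∀ u ∈ A, ∀ v ∈ A, G.Adj u v → (D u v ↔ E u v) := fun u hu v hv huv ↦ by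
    rcases h u hu v hv huv with h | h
    · exact h
    · rw [hD.iff_not u hu v hv huv, h, hE.iff_not u hu v hv huv]
  ext u v
  refine ⟨fun huv ↦ ?_, fun huv ↦ ?_⟩
  · obtain ⟨hadj, hu, hv⟩ := hD.adj_and_mem u v huv
    exact (hiff u hu v hv hadj).1 huv
  · obtain ⟨hadj, hu, hv⟩ := hE.adj_and_mem u v huv
    exact (hiff u hu v hv hadj).2 huv

lemma IsOrientationOn.swap (hD : IsOrientationOn G A D) :
    IsOrientationOn G A (Function.swap D) where
  adj_and_mem u v huv := by
    obtain ⟨hadj, hv, hu⟩ := hD.adj_and_mem v u huv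
    exact ⟨hadj.symm, hu, hv⟩
  iff_not u hu v hv huv := hD.iff_not v hv u hu huv.symm

variable [Fintype V]

/-- The orientations of `G[A]` in which no `k`-clique of `G[A]` is strongly connected. -/
def freeOn (G : SimpleGraph V) (k : ℕ) (A : Finset V) : Finset (V → V → Prop) :=
  {D | IsOrientationOn G A D ∧ ∀ S ⊆ A, G.IsNClique k S → ¬ IsStrongOn D S}

/-- The free orientations of `G[B]` which extend the orientation `D` of `G[A]`. -/
def freeExt (G : SimpleGraph V) (k : ℕ) (A B : Finset V) (D : V → V → Prop) :
    Finset (V → V → Prop) :=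
  {E ∈ freeOn G k B | restrictOn E A = D}

lemma mem_freeOn :
    D ∈ freeOn G k A ↔ IsOrientationOn G A D ∧ ∀ S ⊆ A, G.IsNClique k S → ¬ IsStrongOn D S := by
  simp [freeOn]

lemma mem_freeExt : E ∈ freeExt G k A B D ↔ E ∈ freeOn G k B ∧ restrictOn E A = D :=
  Finset.mem_filter

lemma isOrientationOn_of_mem_freeOn (hD : D ∈ freeOn G k A) : IsOrientationOn G A D :=
  (mem_freeOn.1 hD).1

lemma not_isStrongOn_of_mem_freeOn (hk : 3 ≤ k) (hD : D ∈ freeOn G k A) (hSA : S ⊆ A)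
    (hcl : G.IsClique (S : Set V)) (hS : k ≤ S.card) : ¬ IsStrongOn D S := by
  intro hstrong
  obtain ⟨hor, hfree⟩ := mem_freeOn.1 hD
  obtain ⟨T, hTS, hT, hTstrong⟩ := hstrong.exists_subset_card_eq (hor.isTournOn hSA hcl) hk hS
  exact hfree T (hTS.trans hSA) ⟨hcl.subset (Finset.coe_subset.2 hTS), hT⟩ hTstrong

lemma restrictOn_mem_freeOn (hD : D ∈ freeOn G k B) (h : A ⊆ B) :
    restrictOn D A ∈ freeOn G k A := by
  obtain ⟨hor, hfree⟩ := mem_freeOn.1 hD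
  refine mem_freeOn.2 ⟨hor.restrictOn h, fun S hS hcl ↦ ?_⟩
  rw [isStrongOn_restrictOn hS]
  exact hfree S (hS.trans h) hcl

lemma freeOn_subset_freeOn (hj : 3 ≤ j) (hjk : j ≤ k) : freeOn G j A ⊆ freeOn G k A :=
  fun _ hD ↦ mem_freeOn.2 ⟨isOrientationOn_of_mem_freeOn hD, fun _ hS hcl ↦
    not_isStrongOn_of_mem_freeOn hj hD hS hcl.isClique (hjk.trans_eq hcl.card_eq.symm)⟩

lemma freeOn_subset_of_card_lt (hA : A.card < k) : freeOn G j A ⊆ freeOn G k A :=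
  fun _ hD ↦ mem_freeOn.2 ⟨isOrientationOn_of_mem_freeOn hD, fun _ hS hcl ↦
    absurd ((Finset.card_le_card hS).trans_lt hA) (by simp [hcl.card_eq])⟩

lemma exists_isStrongOn_of_notMem_freeOn (hD : D ∈ freeOn G k A) (hD' : D ∉ freeOn G j A) :
    ∃ S ⊆ A, S.card = j ∧ IsStrongOn D S := by
  by_contra! h
  exact hD' (mem_freeOn.2
    ⟨isOrientationOn_of_mem_freeOn hD, fun S hS hcl ↦ h S hS hcl.card_eq⟩)

lemma isStrongOn_of_notMem_freeOn (hD : D ∈ freeOn G k A) (hD' : D ∉ freeOn G A.card A) :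
    IsStrongOn D A := by
  obtain ⟨S, hSA, hS, hstrong⟩ := exists_isStrongOn_of_notMem_freeOn hD hD'
  exact Finset.eq_of_subset_of_card_le hSA hS.ge ▸ hstrong

lemma isOrientationOn_of_mem_freeExt (hE : E ∈ freeExt G k A B D) : IsOrientationOn G B E :=
  isOrientationOn_of_mem_freeOn (mem_freeExt.1 hE).1

lemma iff_of_mem_freeExt (hE : E ∈ freeExt G k A B D) {u v : V} (hu : u ∈ A) (hv : v ∈ A) :
    E u v ↔ D u v := by
  rw [← (mem_freeExt.1 hE).2]
  simp [restrictOn, hu, hv]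

lemma restrictOn_mem_freeExt {A' B' : Finset V} (hE : E ∈ freeExt G k A B D) (hAB : A' ⊆ B')
    (hA : A' ⊆ A) (hB : B' ⊆ B) : restrictOn E B' ∈ freeExt G k A' B' (restrictOn D A') := by
  obtain ⟨hfree, rfl⟩ := mem_freeExt.1 hE
  refine mem_freeExt.2 ⟨restrictOn_mem_freeOn hfree hB, ?_⟩
  rw [restrictOn_restrictOn hAB, restrictOn_restrictOn hA]

lemma swap_mem_freeOn (hD : D ∈ freeOn G k A) : Function.swap D ∈ freeOn G k A := by
  obtain ⟨hor, hfree⟩ := mem_freeOn.1 hD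
  exact mem_freeOn.2 ⟨hor.swap, fun S hS hcl ↦ isStrongOn_swap.not.2 (hfree S hS hcl)⟩

lemma card_freeExt_le_card_freeExt_swap :
    (freeExt G k A B D).card ≤ (freeExt G k A B (Function.swap D)).card := by
  refine Finset.card_le_card_of_injOn Function.swap (fun E hE ↦ ?_)
    Function.swap_bijective.injective.injOn
  obtain ⟨hfree, rfl⟩ := mem_freeExt.1 hE
  exact mem_freeExt.2 ⟨swap_mem_freeOn hfree, swap_restrictOn.symm⟩

lemma card_freeOn_eq_sum (h : A ⊆ B) :
    (freeOn G k B).card = ∑ D ∈ freeOn G k A, (freeExt G k A B D).card :=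
  Finset.card_eq_sum_card_fiberwise fun _ hE ↦ restrictOn_mem_freeOn hE h

lemma card_freeOn_insert_le_mul {h : ℕ}
    (hh : ∀ D ∈ freeOn G k A, (freeExt G k A (insert y A) D).card ≤ h) :
    (freeOn G k (insert y A)).card ≤ (freeOn G k A).card * h := by
  rw [card_freeOn_eq_sum (Finset.subset_insert y A)]
  exact Finset.sum_le_card_nsmul _ _ _ hh

-- An extension of `D` to `A` is determined by its restrictions to `A \ W` and to the sets
-- `W ∪ {y}`.
lemma card_freeExt_le_mul_prod (h : W ⊆ A) :
    (freeExt G k W A D).card ≤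
      (freeOn G k (A \ W)).card * ∏ y ∈ A \ W, (freeExt G k W (insert y W) D).card := by
  rw [← Finset.card_pi, ← Finset.card_product]
  refine Finset.card_le_card_of_injOn
    (fun E ↦ (restrictOn E (A \ W), fun y _ ↦ restrictOn E (insert y W))) (fun E hE ↦ ?_) ?_
  · rw [Finset.mem_coe] at hE
    refine Finset.mem_product.2 ⟨restrictOn_mem_freeOn (mem_freeExt.1 hE).1 Finset.sdiff_subset,
      Finset.mem_pi.2 fun y hy ↦ mem_freeExt.2 ⟨restrictOn_mem_freeOn (mem_freeExt.1 hE).1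
        (Finset.insert_subset (Finset.mem_sdiff.1 hy).1 h), ?_⟩⟩
    rw [restrictOn_restrictOn (Finset.subset_insert y W), (mem_freeExt.1 hE).2]
  · intro E hE F hF hEF
    obtain ⟨hrest, hext⟩ := Prod.mk.inj hEF
    have hiff : ∀ {S : Finset V}, restrictOn E S = restrictOn F S → ∀ {u v}, u ∈ S → v ∈ S →
        (E u v ↔ F u v) := fun {S} h u v hu hv ↦ by
      simpa [restrictOn, hu, hv] using congrFun₂ h u v
    have hins : ∀ y ∈ A \ W, restrictOn E (insert y W) = restrictOn F (insert y W) :=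
      fun y hy ↦ congrFun₂ hext y hy
    refine (isOrientationOn_of_mem_freeExt hE).eq_of_forall (isOrientationOn_of_mem_freeExt hF)
      fun u hu v hv _ ↦ .inl ?_
    by_cases hu' : u ∈ W
    · by_cases hv' : v ∈ W
      · rw [iff_of_mem_freeExt hE hu' hv', iff_of_mem_freeExt hF hu' hv']
      · exact hiff (hins v (by simp [*])) (by simp [hu']) (by simp)
    · by_cases hv' : v ∈ W
      · exact hiff (hins u (by simp [*])) (by simp) (by simp [hv'])
      · exact hiff hrest (by simp [*]) (by simp [*])

lemma card_freeOn_le_mul_pow {h : ℕ} (hWA : W ⊆ A)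
    (hh : ∀ D ∈ freeOn G k W, ∀ y ∈ A \ W, (freeExt G k W (insert y W) D).card ≤ h) :
    (freeOn G k A).card ≤
      (freeOn G k W).card * ((freeOn G k (A \ W)).card * h ^ (A \ W).card) := by
  rw [card_freeOn_eq_sum hWA]
  refine Finset.sum_le_card_nsmul _ _ _ fun D hD ↦ (card_freeExt_le_mul_prod hWA).trans ?_
  exact Nat.mul_le_mul_left _ (Finset.prod_le_pow_card _ _ _ (hh D hD))

lemma card_freeOn_le_insert_mul_pow {h : ℕ} (hWA : W ⊆ A) (hy : y ∈ A \ W)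
    (hh : ∀ D ∈ freeOn G k W, ∀ z ∈ A \ W, (freeExt G k W (insert z W) D).card ≤ h) :
    (freeOn G k A).card ≤
      (freeOn G k (insert y W)).card * ((freeOn G k (A \ W)).card * h ^ ((A \ W).card - 1)) := by
  rw [card_freeOn_eq_sum hWA, card_freeOn_eq_sum (Finset.subset_insert y W), Finset.sum_mul]
  refine Finset.sum_le_sum fun D hD ↦ (card_freeExt_le_mul_prod hWA).trans ?_
  rw [← Finset.mul_prod_erase _ _ hy, mul_left_comm, ← Finset.card_erase_of_mem hy]
  gcongr
  exact Finset.prod_le_pow_card _ _ _ fun z hz ↦ hh D hD z (Finset.mem_of_mem_erase hz)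

lemma card_le_card_freeExt_of_subset {A' : Finset V} {s : Finset (V → V → Prop)} (hA : A' ⊆ A)
    (hs : s ⊆ freeExt G k A (insert y A) D)
    (h : ∀ x ∈ A \ A', G.Adj y x → ∀ E ∈ s, ∀ F ∈ s, (E y x ↔ F y x)) :
    s.card ≤ (freeExt G k A' (insert y A') (restrictOn D A')).card := by
  refine Finset.card_le_card_of_injOn (fun E ↦ restrictOn E (insert y A')) (fun E hE ↦ ?_) ?_
  · exact restrictOn_mem_freeExt (hs hE) (Finset.subset_insert _ _) hA
      (Finset.insert_subset_insert y hA)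
  · intro E hE F hF hEF
    have hy : ∀ x ∈ A, G.Adj y x → (E y x ↔ F y x) := fun x hx hyx ↦ by
      by_cases hx' : x ∈ A'
      · simpa [restrictOn, hx'] using congrFun₂ hEF y x
      · exact h x (Finset.mem_sdiff.2 ⟨hx, hx'⟩) hyx E hE F hF
    refine (isOrientationOn_of_mem_freeExt (hs hE)).eq_of_forall
      (isOrientationOn_of_mem_freeExt (hs hF)) fun u hu v hv huv ↦ ?_
    rcases Finset.mem_insert.1 hu with rfl | huA <;> rcases Finset.mem_insert.1 hv with rfl | hvA
    · exact absurd rfl huv.ne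
    · exact .inl (hy v hvA huv)
    · exact .inr (hy u huA huv.symm)
    · exact .inl ((iff_of_mem_freeExt (hs hE) huA hvA).trans
        (iff_of_mem_freeExt (hs hF) huA hvA).symm)

end FreeOrientations

section AttachingVertex

variable {G : SimpleGraph V} {j k : ℕ} {A C S : Finset V} {D E : V → V → Prop} {s x y : V}

lemma isClique_coe_insert (hcl : G.IsClique (A : Set V)) (hy : ∀ x ∈ A, G.Adj y x) :
    G.IsClique (insert y A : Finset V) := by
  rw [Finset.coe_insert]
  exact hcl.insert fun x hx _ ↦ hy x hx

lemma notMem_of_forall_adj (hy : ∀ x ∈ A, G.Adj y x) : y ∉ A :=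
  fun h ↦ G.irrefl (hy y h)

variable [Fintype V]

lemma card_freeExt_insert_le_two_pow :
    (freeExt G k A (insert y A) D).card ≤ 2 ^ (A.filter (G.Adj y)).card := by
  rw [← Finset.card_powerset]
  refine Finset.card_le_card_of_injOn (fun E ↦ A.filter (E y)) (fun E hE ↦ ?_) ?_
  · refine Finset.mem_powerset.2 (Finset.monotone_filter_right A fun x _ hyx ↦ ?_)
    exact ((isOrientationOn_of_mem_freeExt hE).adj_and_mem y x hyx).1
  · intro E hE F hF hEF
    have hy : ∀ x ∈ A, (E y x ↔ F y x) := fun x hx ↦ by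
      simpa [hx] using Finset.ext_iff.1 hEF x
    refine (isOrientationOn_of_mem_freeExt hE).eq_of_forall (isOrientationOn_of_mem_freeExt hF)
      fun u hu v hv huv ↦ ?_
    rcases Finset.mem_insert.1 hu with rfl | huA <;> rcases Finset.mem_insert.1 hv with rfl | hvA
    · exact absurd rfl huv.ne
    · exact .inl (hy v hvA)
    · exact .inr (hy u huA)
    · exact .inl ((iff_of_mem_freeExt hE huA hvA).trans (iff_of_mem_freeExt hF huA hvA).symm)

lemma card_freeExt_insert_le_two_pow_card : (freeExt G k A (insert y A) D).card ≤ 2 ^ A.card :=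
  card_freeExt_insert_le_two_pow.trans
    (Nat.pow_le_pow_right two_pos (Finset.card_filter_le _ _))

lemma not_isStrongOn_insert (hk : 3 ≤ k) (hE : E ∈ freeOn G k (insert y A)) (hSA : S ⊆ A)
    (hcl : G.IsClique (S : Set V)) (hy : ∀ x ∈ S, G.Adj y x) (hS : k ≤ S.card + 1) :
    ¬ IsStrongOn E (insert y S) := by
  refine not_isStrongOn_of_mem_freeOn hk hE (Finset.insert_subset_insert y hSA)
    (isClique_coe_insert hcl hy) ?_
  rwa [Finset.card_insert_of_notMem (notMem_of_forall_adj hy)]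

-- Otherwise `y → head → ⋯ → z → y` is a closed walk through `k` or more vertices.
lemma forall_mem_drop_of_isChain (hk : 3 ≤ k) {l : List V} (hnd : l.Nodup)
    (hcl : G.IsClique (l.toFinset : Set V)) (hy : ∀ x ∈ l, G.Adj y x)
    (hE : E ∈ freeOn G k (insert y l.toFinset)) (hl : l.IsChain E) (hne : l ≠ [])
    (hhead : E y (l.head hne)) : ∀ z ∈ l.drop (k - 2), E y z := by
  intro z hz
  obtain ⟨i, hi, rfl⟩ := List.mem_drop_iff_getElem.1 hz
  set l' := l.take (k - 2 + i + 1) with hl'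
  have hpre : l' <+: l := List.take_prefix _ _
  have hsub : l'.toFinset ⊆ l.toFinset := fun z hz ↦
    List.mem_toFinset.2 (hpre.subset (List.mem_toFinset.1 hz))
  have hlen : l'.length = k - 2 + i + 1 := List.length_take_of_le (by omega)
  have hne' : l' ≠ [] := List.ne_nil_of_length_eq_add_one hlen
  have hi' : k - 2 + i < l.length := by omega
  by_contra hyz
  have hzy : E l[k - 2 + i] y := by
    rwa [(isOrientationOn_of_mem_freeOn hE).iff_not _ (by simp) _ (by simp)
      (hy _ (List.getElem_mem hi')).symm]
  refine not_isStrongOn_insert hk hE hsub (hcl.subset (Finset.coe_subset.2 hsub))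
    (fun x hx ↦ hy x (hpre.subset (List.mem_toFinset.1 hx))) ?_
    (isStrongOn_insert_toFinset (hl.prefix hpre) hne' ?_ ?_)
  · rw [List.toFinset_card_of_nodup (hnd.sublist hpre.sublist)]
    omega
  · rwa [List.IsPrefix.head hpre]
  · have hlast : l'.getLast hne' = l[k - 2 + i] := by
      simp [hl', List.getLast_eq_getElem, Nat.min_eq_left (show k - 2 + i + 1 ≤ l.length from hi')]
    rwa [hlast]

lemma card_filter_freeExt_toFinset_le (hk : 3 ≤ k) {l : List V} (hnd : (x :: l).Nodup)
    (hl : (x :: l).IsChain D) (hcl : G.IsClique ((x :: l).toFinset : Set V))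
    (hy : ∀ z ∈ x :: l, G.Adj y z) :
    ((freeExt G k (x :: l).toFinset (insert y (x :: l).toFinset) D).filter (· y x)).card ≤
      2 ^ (k - 3) := by
  have hsub : (l.take (k - 3)).toFinset ⊆ (x :: l).toFinset := fun z hz ↦
    List.mem_toFinset.2 (List.mem_cons_of_mem x (List.mem_of_mem_take (List.mem_toFinset.1 hz)))
  refine (card_le_card_freeExt_of_subset hsub (Finset.filter_subset _ _) ?_).trans
    (card_freeExt_insert_le_two_pow_card.trans (Nat.pow_le_pow_right two_pos
      ((List.toFinset_card_le _).trans (List.length_take_le _ _))))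
  have hforced : ∀ z ∈ (x :: l).toFinset \ (l.take (k - 3)).toFinset,
      ∀ E ∈ (freeExt G k (x :: l).toFinset (insert y (x :: l).toFinset) D).filter (· y x),
      E y z := by
    intro z hz E hE
    obtain ⟨hE, hyx⟩ := Finset.mem_filter.1 hE
    simp only [Finset.mem_sdiff, List.mem_toFinset, List.mem_cons] at hz
    obtain ⟨rfl | hzl, hzt⟩ := hz
    · exact hyx
    have hlE : (x :: l).IsChain E := hl.imp_of_mem_imp fun u v hu hv huv ↦
      (iff_of_mem_freeExt hE (List.mem_toFinset.2 hu) (List.mem_toFinset.2 hv)).2 huv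
    refine forall_mem_drop_of_isChain hk hnd hcl hy (mem_freeExt.1 hE).1 hlE
      (List.cons_ne_nil x l) hyx z ?_
    rw [← List.take_append_drop (k - 3) l, List.mem_append] at hzl
    rw [show k - 2 = k - 3 + 1 by omega, List.drop_succ_cons]
    exact hzl.resolve_left hzt
  exact fun z hz _ E hE F hF ↦ iff_of_true (hforced z hz E hE) (hforced z hz F hF)

lemma card_freeExt_toFinset_le (hk : 3 ≤ k) {l : List V} (hnd : l.Nodup) (hl : l.IsChain D)
    (hcl : G.IsClique (l.toFinset : Set V)) (hy : ∀ x ∈ l, G.Adj y x) (hlen : k ≤ l.length + 2) :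
    (freeExt G k l.toFinset (insert y l.toFinset) D).card ≤
      (l.length + 4 - k) * 2 ^ (k - 3) := by
  induction l generalizing D with
  | nil =>
    rw [List.length_nil] at hlen
    omega
  | cons x l ih =>
    rw [List.length_cons] at hlen ⊢
    rcases hlen.eq_or_lt with rfl | hlt
    · refine card_freeExt_insert_le_two_pow_card.trans_eq ?_
      rw [List.toFinset_card_of_nodup hnd, List.length_cons,
        show l.length + 1 + 4 - (l.length + 1 + 2) = 2 by omega, ← pow_succ']
      congr 1
    have hsub : l.toFinset ⊆ (x :: l).toFinset := by simp
    have hin : ((freeExt G k (x :: l).toFinset (insert y (x :: l).toFinset) D).filter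
        fun E ↦ ¬ E y x).card ≤ (l.length + 4 - k) * 2 ^ (k - 3) := by
      refine (card_le_card_freeExt_of_subset hsub (Finset.filter_subset _ _) ?_).trans
        (ih hnd.of_cons ?_ (hcl.subset (Finset.coe_subset.2 hsub)) (fun z hz ↦ hy z (by simp [hz]))
          (by omega))
      · intro z hz _ E hE F hF
        obtain rfl : z = x := by simp at hz; tauto
        exact iff_of_false (Finset.mem_filter.1 hE).2 (Finset.mem_filter.1 hF).2
      · exact hl.tail.imp_of_mem_imp fun u v hu hv huv ↦ ⟨huv, by simpa using hu, by simpa using hv⟩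
    have hout := card_filter_freeExt_toFinset_le hk hnd hl hcl hy
    rw [← Finset.card_filter_add_card_filter_not (fun E ↦ E y x),
      show l.length + 1 + 4 - k = l.length + 4 - k + 1 by omega]
    linarith

lemma card_freeExt_insert_le (hk : 3 ≤ k) (hcl : G.IsClique (A : Set V))
    (hy : ∀ x ∈ A, G.Adj y x) (hA : k ≤ A.card + 2) (hD : IsTournOn D A) :
    (freeExt G k A (insert y A) D).card ≤ (A.card + 4 - k) * 2 ^ (k - 3) := by
  obtain ⟨l, hnd, rfl, hl⟩ := hD.exists_isChain
  rw [List.toFinset_card_of_nodup hnd] at hA ⊢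
  exact card_freeExt_toFinset_le hk hnd hl hcl (by simpa using hy) hA

lemma card_freeExt_insert_le_of_not_adj (hk : 3 ≤ k) (hcl : G.IsClique (A : Set V))
    (hx : x ∈ A) (hyx : ¬ G.Adj y x) (hA : k ≤ A.card + 1) (hD : IsTournOn D A) :
    (freeExt G k A (insert y A) D).card ≤ (A.card + 3 - k) * 2 ^ (k - 3) := by
  have hlt : (A.filter (G.Adj y)).card < A.card :=
    Finset.card_lt_card (Finset.filter_ssubset.2 ⟨x, hx, hyx⟩)
  have hsub := Finset.filter_subset (G.Adj y) A
  rcases le_or_gt k ((A.filter (G.Adj y)).card + 2) with hk' | hk'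
  · refine (card_le_card_freeExt_of_subset hsub subset_rfl fun z hz hyz ↦ ?_).trans
      ((card_freeExt_insert_le hk (hcl.subset (Finset.coe_subset.2 hsub))
        (fun z hz ↦ (Finset.mem_filter.1 hz).2) hk' ?_).trans ?_)
    · simp_all
    · exact fun u hu v hv huv ↦ by
        simpa only [restrictOn, Finset.mem_coe.1 hu, Finset.mem_coe.1 hv, and_true] using
          hD (hsub hu) (hsub hv) huv
    · exact Nat.mul_le_mul_right _ (by omega)
  · refine card_freeExt_insert_le_two_pow.trans ?_
    refine (Nat.pow_le_pow_right two_pos (show _ ≤ k - 3 by omega)).trans ?_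
    exact Nat.le_mul_of_pos_left _ (by omega)

lemma forall_or_forall_of_isStrongOn (hk : 3 ≤ k) (hE : E ∈ freeOn G k (insert y A)) (hCA : C ⊆ A)
    (hcl : G.IsClique (C : Set V)) (hy : ∀ x ∈ C, G.Adj y x) (hC : k ≤ C.card + 1)
    (hst : IsStrongOn E C) : (∀ c ∈ C, E y c) ∨ ∀ c ∈ C, ¬ E y c := by
  by_contra! ⟨⟨b, hb, hyb⟩, c, hc, hyc⟩
  refine not_isStrongOn_insert hk hE hCA hcl hy hC (hst.insert_of_arcs hc hb hyc ?_)
  exact ((isOrientationOn_of_mem_freeOn hE).iff_not b (Finset.mem_insert_of_mem (hCA hb)) y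
    (Finset.mem_insert_self y A) (hy b hb).symm).2 hyb

lemma card_freeExt_insert_le_one {s : Finset (V → V → Prop)}
    (hs : s ⊆ freeExt G k A (insert y A) D)
    (h : ∀ x ∈ A, ∀ E ∈ s, ∀ F ∈ s, (E y x ↔ F y x)) : s.card ≤ 1 := by
  simpa using (card_le_card_freeExt_of_subset (Finset.empty_subset A) hs
    fun x hx _ ↦ h x (Finset.mem_sdiff.1 hx).1).trans card_freeExt_insert_le_two_pow_card

lemma card_freeExt_insert_le_two (hk : 3 ≤ k) (hcl : G.IsClique (A : Set V))
    (hy : ∀ x ∈ A, G.Adj y x) (hA : k ≤ A.card + 1) (hD : IsStrongOn D A) :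
    (freeExt G k A (insert y A) D).card ≤ 2 := by
  have hor : ∀ E ∈ freeExt G k A (insert y A) D, (∀ c ∈ A, E y c) ∨ ∀ c ∈ A, ¬ E y c := by
    intro E hE
    obtain ⟨hfree, rfl⟩ := mem_freeExt.1 hE
    exact forall_or_forall_of_isStrongOn hk hfree subset_rfl hcl hy hA
      ((isStrongOn_restrictOn subset_rfl).1 hD)
  rw [← Finset.card_filter_add_card_filter_not fun E ↦ ∀ c ∈ A, E y c]
  refine add_le_add (card_freeExt_insert_le_one (Finset.filter_subset _ _) ?_)
    (card_freeExt_insert_le_one (Finset.filter_subset _ _) ?_) <;>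
    simp only [Finset.mem_filter]
  · exact fun x hx E hE F hF ↦ iff_of_true (hE.2 x hx) (hF.2 x hx)
  · exact fun x hx E hE F hF ↦ iff_of_false ((hor E hE.1).resolve_left hE.2 x hx)
      ((hor F hF.1).resolve_left hF.2 x hx)

/- If `y → s → C` and `C` is strong, an arc from `C` to `y` would make `C ∪ {s, y}` strong: attach
`y` to `C` and then `s`, or use the cycles `y → s → c → y` when `C` has no arc from `y`. -/
lemma forall_of_isStrongOn_of_source (hk : 3 ≤ k) (hE : E ∈ freeOn G k (insert y (insert s C)))
    (hcl : G.IsClique (insert s C : Finset V)) (hy : ∀ x ∈ insert s C, G.Adj y x) (hsC : s ∉ C)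
    (hC : k ≤ C.card + 2) (hst : IsStrongOn E C) (hs : ∀ c ∈ C, E s c) (hys : E y s) :
    ∀ c ∈ C, E y c := by
  have hnot := not_isStrongOn_insert hk hE subset_rfl hcl hy
    (by rw [Finset.card_insert_of_notMem hsC]; omega)
  have hcy : ∀ c ∈ C, ¬ E y c → E c y := fun c hc ↦
    ((isOrientationOn_of_mem_freeOn hE).iff_not c (by simp [hc]) y (by simp)
      (hy c (by simp [hc])).symm).2
  by_contra! ⟨b, hb, hyb⟩
  by_cases hyC : ∃ c ∈ C, E y c
  · obtain ⟨c, hc, hyc⟩ := hyC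
    have hstrong := hst.insert_of_arcs hc hb hyc (hcy b hb hyb)
    rw [Finset.insert_comm] at hnot
    exact hnot (hstrong.insert_of_arcs (Finset.mem_insert_of_mem hc) (Finset.mem_insert_self y C)
      (hs c hc) hys)
  · push Not at hyC
    rw [Finset.insert_comm] at hnot
    exact hnot (isStrongOn_insert_insert ⟨b, hb⟩ hs (fun c hc ↦ hcy c hc (hyC c hc)) hys)

lemma card_freeExt_insert_le_of_source (hk : 3 ≤ k) (hcl : G.IsClique (insert s C : Finset V))
    (hy : ∀ x ∈ insert s C, G.Adj y x) (hsC : s ∉ C) (hC : k ≤ C.card + 2) (hst : IsStrongOn D C)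
    (hs : ∀ c ∈ C, D s c) :
    (freeExt G k (insert s C) (insert y (insert s C)) D).card ≤
      (freeExt G k C (insert y C) (restrictOn D C)).card + 1 := by
  have hall : ∀ E ∈ freeExt G k (insert s C) (insert y (insert s C)) D, E y s →
      ∀ c ∈ C, E y c := by
    intro E hE
    have hCs := Finset.subset_insert s C
    obtain ⟨hfree, rfl⟩ := mem_freeExt.1 hE
    rw [isStrongOn_restrictOn hCs] at hst
    exact forall_of_isStrongOn_of_source hk hfree hcl hy hsC hC hst fun c hc ↦ (hs c hc).1
  rw [← Finset.card_filter_add_card_filter_not fun E ↦ ¬ E y s]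
  refine add_le_add (card_le_card_freeExt_of_subset (Finset.subset_insert s C)
    (Finset.filter_subset _ _) ?_) (card_freeExt_insert_le_one (Finset.filter_subset _ _) ?_)
  · intro x hx _ E hE F hF
    obtain rfl : x = s := by simp at hx; tauto
    exact iff_of_false (Finset.mem_filter.1 hE).2 (Finset.mem_filter.1 hF).2
  · simp only [Finset.mem_filter, not_not]
    intro x hx E hE F hF
    rcases Finset.mem_insert.1 hx with rfl | hxC
    · exact iff_of_true hE.2 hF.2
    · exact iff_of_true (hall E hE.1 hE.2 x hxC) (hall F hF.1 hF.2 x hxC)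

lemma card_freeExt_insert_le_of_sink (hk : 3 ≤ k) (hcl : G.IsClique (insert s C : Finset V))
    (hy : ∀ x ∈ insert s C, G.Adj y x) (hsC : s ∉ C) (hC : k ≤ C.card + 2) (hst : IsStrongOn D C)
    (hs : ∀ c ∈ C, D c s) :
    (freeExt G k (insert s C) (insert y (insert s C)) D).card ≤
      (freeExt G k C (insert y C) (restrictOn D C)).card + 1 := by
  refine card_freeExt_le_card_freeExt_swap.trans
    ((card_freeExt_insert_le_of_source hk hcl hy hsC hC (isStrongOn_swap.2 hst) hs).trans ?_)
  rw [← swap_restrictOn]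
  exact Nat.add_le_add_right card_freeExt_le_card_freeExt_swap 1

-- A strong set `C` inside the non-strong `A` leaves one vertex, which is a source or a sink of `A`.
lemma exists_card_freeExt_insert_le (hk : 3 ≤ k) (hkj : k ≤ j + 2) (hA : A.card = j + 1)
    (hcl : G.IsClique (A : Set V)) (hy : ∀ x ∈ A, G.Adj y x) (hD : D ∈ freeOn G (j + 1) A)
    (hD' : D ∉ freeOn G j A) :
    ∃ C ⊆ A, C.card = j ∧ IsStrongOn D C ∧ (freeExt G k A (insert y A) D).card ≤
      (freeExt G k C (insert y C) (restrictOn D C)).card + 1 := by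
  obtain ⟨C, hCA, rfl, hst⟩ := exists_isStrongOn_of_notMem_freeOn hD hD'
  refine ⟨C, hCA, rfl, hst, ?_⟩
  obtain ⟨s, hsC, rfl⟩ : ∃ s ∉ C, insert s C = A :=
    (Finset.covBy_iff_exists_insert.1 (Finset.covBy_iff_card_sdiff_eq_one.2
      ⟨hCA, by rw [Finset.card_sdiff_of_subset hCA]; omega⟩))
  obtain ⟨hor, hfree⟩ := mem_freeOn.1 hD
  by_cases hsource : ∀ c ∈ C, D s c
  · exact card_freeExt_insert_le_of_source hk hcl hy hsC hkj hst hsource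
  by_cases hsink : ∀ c ∈ C, D c s
  · exact card_freeExt_insert_le_of_sink hk hcl hy hsC hkj hst hsink
  push Not at hsource hsink
  obtain ⟨b, hb, hsb⟩ := hsource
  obtain ⟨c, hc, hcs⟩ := hsink
  have hiff : ∀ x ∈ C, (D x s ↔ ¬ D s x) := fun x hx ↦
    hor.isTournOn subset_rfl hcl (by simp [hx]) (by simp) (by rintro rfl; exact hsC hx)
  exact absurd (hst.insert_of_arcs hc hb (not_not.1 fun h ↦ hcs ((hiff c hc).2 h))
    ((hiff b hb).2 hsb)) (hfree _ subset_rfl ⟨hcl, hA⟩)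

end AttachingVertex

section OrientationCounts

lemma sym2_out_mk_eq_or (u v : V) : s(u, v).out = (u, v) ∨ s(u, v).out = (v, u) := by
  have h : s(s(u, v).out.1, s(u, v).out.2) = s(u, v) := Quot.out_eq _
  simpa [Prod.ext_iff] using Sym2.eq_iff.1 h

variable {G : SimpleGraph V}

lemma orient_ext_out {D E : G.Orient}
    (h : ∀ e ∈ G.edgeSet, D.1 e.out.1 e.out.2 ↔ E.1 e.out.1 e.out.2) : D = E := by
  have hiff : ∀ u v, G.Adj u v → (D.1 u v ↔ E.1 u v) := fun u v huv ↦ by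
    have := h s(u, v) huv
    rcases sym2_out_mk_eq_or u v with h' | h' <;> rw [h'] at this
    · exact this
    · rw [D.2.2 u v huv, E.2.2 u v huv, this]
  ext u v
  exact ⟨fun huv ↦ (hiff u v (D.2.1 u v huv)).1 huv, fun huv ↦ (hiff u v (E.2.1 u v huv)).2 huv⟩

lemma exists_orient_forall_out (s : Set G.edgeSet) :
    ∃ D : G.Orient, ∀ e : G.edgeSet, D.1 e.1.out.1 e.1.out.2 ↔ e ∈ s := by
  refine ⟨⟨fun u v ↦ ∃ h : G.Adj u v, (⟨s(u, v), h⟩ ∈ s ↔ s(u, v).out = (u, v)),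
    fun u v h ↦ h.1, fun u v h ↦ ?_⟩, fun ⟨e, he⟩ ↦ ?_⟩
  · simp only [h, h.symm, exists_true_left, Sym2.eq_swap (a := v) (b := u)]
    rcases sym2_out_mk_eq_or u v with h' | h' <;> simp [h', h.ne, h.ne.symm]
  · have hout : s(e.out.1, e.out.2) = e := Quot.out_eq e
    have hadj : G.Adj e.out.1 e.out.2 := by rwa [← hout] at he
    simp [hout, hadj]

lemma card_orient (G : SimpleGraph V) [Fintype G.edgeSet] :
    Nat.card G.Orient = 2 ^ G.edgeFinset.card := by
  have hbij : Function.Bijective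
      fun (D : G.Orient) ↦ {e : G.edgeSet | D.1 e.1.out.1 e.1.out.2} :=
    ⟨fun D E h ↦ orient_ext_out fun e he ↦ Set.ext_iff.1 h ⟨e, he⟩,
      fun s ↦ (exists_orient_forall_out s).imp fun D hD ↦ Set.ext hD⟩
  rw [Nat.card_eq_of_bijective _ hbij, Nat.card_eq_fintype_card, Fintype.card_set,
    SimpleGraph.edgeFinset_card]

variable [Fintype V] {k : ℕ} {A : Finset V}

lemma card_freeOn_le_two_pow_card_edgeFinset :
    (freeOn G k A).card ≤ 2 ^ (G.induce (A : Set V)).edgeFinset.card := by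
  rw [← card_orient, ← Nat.card_eq_finsetCard]
  refine Nat.card_le_card_of_injective (fun D ↦ ⟨fun u v ↦ D.1 u v, fun u v h ↦ ?_,
    fun u v ↦ ?_⟩) fun D E h ↦ ?_
  · exact ((isOrientationOn_of_mem_freeOn D.2).adj_and_mem u v h).1
  · exact (isOrientationOn_of_mem_freeOn D.2).iff_not u u.2 v v.2
  · refine Subtype.ext ((isOrientationOn_of_mem_freeOn D.2).eq_of_forall
      (isOrientationOn_of_mem_freeOn E.2) fun u hu v hv _ ↦ .inl ?_)
    exact iff_of_eq (congrFun₂ (Subtype.ext_iff.1 h) ⟨u, hu⟩ ⟨v, hv⟩)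

lemma card_freeOn_le_two_pow_choose_two : (freeOn G k A).card ≤ 2 ^ A.card.choose 2 := by
  refine card_freeOn_le_two_pow_card_edgeFinset.trans (Nat.pow_le_pow_right two_pos ?_)
  simpa using (G.induce (A : Set V)).card_edgeFinset_le_card_choose_two

lemma card_edgeFinset_le_turanNum {r : ℕ} [Fintype G.edgeSet] (hG : G.CliqueFree (r + 1)) :
    G.edgeFinset.card ≤ turanNum r (Fintype.card V) := by
  convert hG.card_edgeFinset_le
  rw [turanNum, ← SimpleGraph.card_edgeFinset_turanGraph]

lemma card_freeOn_le_of_cliqueFreeOn {r : ℕ} (hA : G.CliqueFreeOn A (r + 1)) :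
    (freeOn G k A).card ≤ 2 ^ turanNum r A.card := by
  refine card_freeOn_le_two_pow_card_edgeFinset.trans (Nat.pow_le_pow_right two_pos ?_)
  simpa using card_edgeFinset_le_turanNum ((SimpleGraph.cliqueFree_induce_iff _ _ _).2 hA)

end OrientationCounts

section SmallCliques

lemma sum_add_card_mul_le {ι : Type*} {s t : Finset ι} {f : ι → ℕ} {b : ℕ} (h : s ⊆ t)
    (hb : ∀ i ∈ t, i ∉ s → f i ≤ b) :
    ∑ i ∈ t, f i + s.card * b ≤ ∑ i ∈ s, f i + t.card * b := by
  have hle : ∑ i ∈ t \ s, f i ≤ (t \ s).card * b :=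
    Finset.sum_le_card_nsmul _ _ _ fun i hi ↦
      hb i (Finset.mem_sdiff.1 hi).1 (Finset.mem_sdiff.1 hi).2
  rw [← Finset.sum_sdiff h, ← Finset.card_sdiff_add_card_eq_card h]
  linarith

variable {G : SimpleGraph V} {k n : ℕ} {A W : Finset V} {D : V → V → Prop} {y : V}

lemma exists_insert_of_isClique (hA : A.card = n + 1) (hcl : G.IsClique (A : Set V)) :
    ∃ y B, insert y B = A ∧ B.card = n ∧ G.IsClique (B : Set V) ∧ ∀ x ∈ B, G.Adj y x := by
  obtain ⟨y, B, hyB, rfl, hB⟩ := Finset.card_eq_succ.1 hA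
  exact ⟨y, B, rfl, hB, hcl.subset (by simp), fun x hx ↦
    hcl (by simp) (by simp [hx]) (ne_of_mem_of_not_mem hx hyB).symm⟩

variable [Fintype V]

lemma card_freeOn_le_one (hA : G.IsIndepSet (A : Set V)) : (freeOn G k A).card ≤ 1 :=
  Finset.card_le_one.2 fun _ hD _ hE ↦
    (isOrientationOn_of_mem_freeOn hD).eq_of_forall (isOrientationOn_of_mem_freeOn hE)
      fun _ hu _ hv huv ↦ absurd huv (hA hu hv huv.ne)

lemma card_freeExt_insert_le_two_of_notMem (hk : 3 ≤ k) (hA : A.card = n) (hnk : k ≤ n + 1)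
    (hcl : G.IsClique (A : Set V)) (hy : ∀ x ∈ A, G.Adj y x) (hD : D ∈ freeOn G k A)
    (hD' : D ∉ freeOn G n A) : (freeExt G k A (insert y A) D).card ≤ 2 :=
  card_freeExt_insert_le_two hk hcl hy (hA ▸ hnk) (isStrongOn_of_notMem_freeOn hD (hA ▸ hD'))

lemma card_freeExt_insert_le_of_mem (hk : 3 ≤ k) (hA : k ≤ A.card + 2)
    (hcl : G.IsClique (A : Set V)) (hy : ∀ x ∈ A, G.Adj y x) (hD : D ∈ freeOn G n A) :
    (freeExt G k A (insert y A) D).card ≤ (A.card + 4 - k) * 2 ^ (k - 3) :=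
  card_freeExt_insert_le hk hcl hy hA
    ((isOrientationOn_of_mem_freeOn hD).isTournOn subset_rfl hcl)

lemma card_freeOn_insert_add_le (hk : 2 ≤ k) (hA : A.card = k) (hcl : G.IsClique (A : Set V))
    (hy : ∀ x ∈ A, G.Adj y x) :
    (freeOn G (k + 1) (insert y A)).card + (freeOn G k A).card * 2 ≤
      (freeOn G k A).card * (3 * 2 ^ (k - 2)) + 2 ^ k.choose 2 * 2 := by
  rw [card_freeOn_eq_sum (Finset.subset_insert y A)]
  refine (sum_add_card_mul_le (freeOn_subset_of_card_lt (hA.trans_lt k.lt_succ_self))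
    fun D hD hD' ↦ card_freeExt_insert_le_two_of_notMem (by omega) hA le_rfl hcl hy hD
      hD').trans (Nat.add_le_add (Finset.sum_le_card_nsmul _ _ _ fun D hD ↦ ?_) ?_)
  · refine (card_freeExt_insert_le_of_mem (by omega) (by omega) hcl hy hD).trans_eq ?_
    rw [hA, show k + 4 - (k + 1) = 3 by omega, show k + 1 - 3 = k - 2 by omega]
  · rw [← hA]
    exact Nat.mul_le_mul_right _ card_freeOn_le_two_pow_choose_two

lemma card_freeOn_three_le (hA : A.card = 3) (hcl : G.IsClique (A : Set V)) :
    (freeOn G 3 A).card ≤ 6 := by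
  obtain ⟨y, B, rfl, hB, hclB, hy⟩ := exists_insert_of_isClique hA hcl
  have hins := card_freeOn_insert_add_le le_rfl hB hclB hy
  have hle : (freeOn G 2 B).card ≤ 2 ^ B.card.choose 2 := card_freeOn_le_two_pow_choose_two
  norm_num [hB] at hins hle
  omega

lemma card_freeOn_four_le (hA : A.card = 4) (hcl : G.IsClique (A : Set V)) :
    (freeOn G 4 A).card ≤ 40 := by
  obtain ⟨y, B, rfl, hB, hclB, hy⟩ := exists_insert_of_isClique hA hcl
  have hins := card_freeOn_insert_add_le (by norm_num) hB hclB hy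
  have hle := card_freeOn_three_le hB hclB
  norm_num [Nat.choose] at hins
  omega

lemma card_freeOn_three_le_of_card_eq_four (hA : A.card = 4) (hcl : G.IsClique (A : Set V)) :
    (freeOn G 3 A).card ≤ 24 := by
  obtain ⟨y, B, rfl, hB, hclB, hy⟩ := exists_insert_of_isClique hA hcl
  refine (card_freeOn_insert_le_mul fun D hD ↦
    card_freeExt_insert_le_of_mem le_rfl (by omega) hclB hy hD).trans ?_
  have := card_freeOn_three_le hB hclB
  rw [hB]
  omega

lemma card_freeExt_four_le (hA : A.card = 4) (hcl : G.IsClique (A : Set V))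
    (hy : ∀ x ∈ A, G.Adj y x) (hD : D ∈ freeOn G 4 A) (hD' : D ∉ freeOn G 3 A) :
    (freeExt G 4 A (insert y A) D).card ≤ 3 := by
  obtain ⟨C, hCA, hC, hstrong, hle⟩ :=
    exists_card_freeExt_insert_le (k := 4) (by norm_num) (by norm_num) hA hcl hy hD hD'
  have := card_freeExt_insert_le_two (k := 4) (by norm_num) (hcl.subset hCA)
    (fun x hx ↦ hy x (hCA hx)) (by omega) ((isStrongOn_restrictOn subset_rfl).2 hstrong)
  omega

lemma card_freeExt_five_le (hA : A.card = 4) (hcl : G.IsClique (A : Set V))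
    (hy : ∀ x ∈ A, G.Adj y x) (hD : D ∈ freeOn G 4 A) (hD' : D ∉ freeOn G 3 A) :
    (freeExt G 5 A (insert y A) D).card ≤ 9 := by
  obtain ⟨C, -, hC, -, hle⟩ :=
    exists_card_freeExt_insert_le (k := 5) (by norm_num) (by norm_num) hA hcl hy hD hD'
  have := card_freeExt_insert_le_two_pow_card (G := G) (k := 5) (A := C) (y := y)
    (D := restrictOn D C)
  rw [hC] at this
  omega

lemma card_freeOn_four_lt_of_card_eq_five (hA : A.card = 5) (hcl : G.IsClique (A : Set V)) :
    (freeOn G 4 A).card < 2 ^ 8 := by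
  obtain ⟨y, B, rfl, hB, hclB, hy⟩ := exists_insert_of_isClique hA hcl
  have hstrata := sum_add_card_mul_le (freeOn_subset_freeOn le_rfl (by norm_num))
    fun D hD hD' ↦ card_freeExt_four_le hB hclB hy hD hD'
  have hsum := Finset.sum_le_card_nsmul (freeOn G 3 B) _ 8 fun D hD ↦
    (card_freeExt_insert_le_of_mem (k := 4) (by norm_num) (by omega) hclB hy hD).trans_eq
      (by simp [hB])
  have h3 := card_freeOn_three_le_of_card_eq_four hB hclB
  have h4 := card_freeOn_four_le hB hclB
  rw [card_freeOn_eq_sum (Finset.subset_insert y B)]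
  rw [smul_eq_mul] at hsum
  omega

lemma card_freeOn_five_lt (hA : A.card = 5) (hcl : G.IsClique (A : Set V)) :
    (freeOn G 5 A).card < 2 ^ 9 := by
  obtain ⟨y, B, rfl, hB, hclB, hy⟩ := exists_insert_of_isClique hA hcl
  have hstrata₄ := sum_add_card_mul_le (freeOn_subset_freeOn (by norm_num) (by norm_num))
    fun D hD hD' ↦ card_freeExt_insert_le_two_of_notMem (k := 5) (by norm_num) hB le_rfl hclB hy
      hD hD'
  have hstrata₃ := sum_add_card_mul_le (freeOn_subset_freeOn le_rfl (by norm_num))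
    fun D hD hD' ↦ card_freeExt_five_le hB hclB hy hD hD'
  have hsum := Finset.sum_le_card_nsmul (freeOn G 3 B) _ 12 fun D hD ↦
    (card_freeExt_insert_le_of_mem (k := 5) (by norm_num) (by omega) hclB hy hD).trans_eq
      (by simp [hB])
  have h3 := card_freeOn_three_le_of_card_eq_four hB hclB
  have h4 := card_freeOn_four_le hB hclB
  have h5 : (freeOn G 5 B).card ≤ 2 ^ B.card.choose 2 := card_freeOn_le_two_pow_choose_two
  rw [card_freeOn_eq_sum (Finset.subset_insert y B)]
  rw [smul_eq_mul] at hsum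
  norm_num [hB, Nat.choose] at h5
  omega

lemma two_mul_card_freeOn_lt (hk : 5 ≤ k) (hA : A.card = k) (hcl : G.IsClique (A : Set V)) :
    2 * (freeOn G k A).card < 2 ^ k.choose 2 := by
  induction k, hk using Nat.le_induction generalizing A with
  | base =>
    have := card_freeOn_five_lt hA hcl
    norm_num [Nat.choose]
    omega
  | succ k hk ih =>
    obtain ⟨y, B, rfl, hB, hclB, hy⟩ := exists_insert_of_isClique hA hcl
    have hins := card_freeOn_insert_add_le (by omega) hB hclB hy
    have hlt := ih hB hclB
    obtain ⟨s, rfl⟩ := Nat.exists_eq_add_of_le' hk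
    rw [Nat.choose_succ_succ' (s + 5) 1, Nat.choose_one_right, pow_add _ (s + 5), pow_add]
    rw [show s + 5 - 2 = s + 3 by omega, pow_add] at hins
    have hs : 1 ≤ 2 ^ s := Nat.one_le_two_pow
    nlinarith

lemma card_freeOn_triangle_add_two_le (hWA : W ⊆ A) (hW : W.card = 3)
    (hcl : G.IsClique (W : Set V)) (hA : (A \ W).card = 2)
    (hind : G.IsIndepSet (A \ W : Finset V)) (hadj : ∀ y ∈ A \ W, ∀ x ∈ W, G.Adj y x) :
    (freeOn G 4 A).card ≤ 224 := by
  have hext : ∀ D h, (∀ y ∈ A \ W, (freeExt G 4 W (insert y W) D).card ≤ h) →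
      (freeExt G 4 W A D).card ≤ h ^ 2 := fun D h hh ↦ by
    calc _ ≤ _ := card_freeExt_le_mul_prod hWA
      _ ≤ 1 * h ^ (A \ W).card :=
        Nat.mul_le_mul (card_freeOn_le_one hind) (Finset.prod_le_pow_card _ _ _ hh)
      _ = h ^ 2 := by rw [hA, one_mul]
  have hstrata := sum_add_card_mul_le (freeOn_subset_freeOn le_rfl (by norm_num))
    fun D hD hD' ↦ hext D 2 fun y hy ↦
      card_freeExt_insert_le_two_of_notMem (by norm_num) hW le_rfl hcl (hadj y hy) hD hD'
  have hsum := Finset.sum_le_card_nsmul (freeOn G 3 W) _ (6 ^ 2) fun D hD ↦ hext D 6 fun y hy ↦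
    (card_freeExt_insert_le_of_mem (by norm_num) (by omega) hcl (hadj y hy) hD).trans_eq
      (by simp [hW])
  have h3 := card_freeOn_three_le hW hcl
  have h4 : (freeOn G 4 W).card ≤ 2 ^ W.card.choose 2 := card_freeOn_le_two_pow_choose_two
  rw [card_freeOn_eq_sum hWA]
  rw [smul_eq_mul] at hsum
  norm_num [hW, Nat.choose] at h4
  omega

lemma card_freeOn_insert_four_le (hA : A.card = 4) (hcl : G.IsClique (A : Set V)) (hyA : y ∉ A)
    (hy : ∃ x ∈ A, ¬ G.Adj y x) : (freeOn G 4 (insert y A)).card ≤ 224 := by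
  obtain ⟨x, hx, hyx⟩ := hy
  have hcard : (A.erase x).card = 3 := by rw [Finset.card_erase_of_mem hx, hA]
  by_cases h : ∀ z ∈ A.erase x, G.Adj y z
  · have hsdiff : insert y A \ A.erase x = {y, x} := by grind
    refine card_freeOn_triangle_add_two_le (by grind) hcard (hcl.subset (by simp)) ?_ ?_ ?_ <;>
      rw [hsdiff]
    · exact Finset.card_pair (ne_of_mem_of_not_mem hx hyA).symm
    · simpa [SimpleGraph.IsIndepSet, Set.pairwise_pair, G.adj_comm x y] using
        fun _ ↦ hyx
    · simp only [Finset.forall_mem_insert, Finset.mem_singleton, forall_eq]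
      exact ⟨h, fun z hz ↦ hcl hx (Finset.mem_of_mem_erase hz) (Finset.ne_of_mem_erase hz).symm⟩
  · push Not at h
    obtain ⟨z, hz, hyz⟩ := h
    have hsub : A.filter (G.Adj y) ⊆ (A.erase x).erase z := by grind
    have hle := (Finset.card_le_card hsub).trans_eq (Finset.card_erase_of_mem hz)
    refine (card_freeOn_insert_le_mul (h := 2 ^ 2) fun D _ ↦ card_freeExt_insert_le_two_pow.trans
      (Nat.pow_le_pow_right two_pos (by omega))).trans ?_
    have := card_freeOn_four_le hA hcl
    omega

end SmallCliques

section MainBound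

variable {G : SimpleGraph V} {r : ℕ} {A S W : Finset V}

lemma exists_isNClique_of_not_cliqueFreeOn (h : ¬ G.CliqueFreeOn A r) :
    ∃ S ⊆ A, G.IsNClique r S := by
  simpa [SimpleGraph.CliqueFreeOn] using h

lemma exists_maximal_isClique (hSA : S ⊆ A) (hS : G.IsClique (S : Set V)) :
    ∃ W ⊆ A, S ⊆ W ∧ G.IsClique (W : Set V) ∧ ∀ y ∈ A \ W, ∃ x ∈ W, ¬ G.Adj y x := by
  have hfin : {T | T ⊆ A ∧ G.IsClique (T : Set V)}.Finite :=
    A.powerset.finite_toSet.subset fun T hT ↦ Finset.mem_coe.2 (Finset.mem_powerset.2 hT.1)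
  obtain ⟨W, hSW, ⟨hWA, hcl⟩, hmax⟩ := hfin.exists_le_maximal ⟨hSA, hS⟩
  refine ⟨W, hWA, hSW, hcl, fun y hy ↦ ?_⟩
  obtain ⟨hyA, hyW⟩ := Finset.mem_sdiff.1 hy
  by_contra! hadj
  exact hyW (hmax ⟨Finset.insert_subset hyA hWA, isClique_coe_insert hcl hadj⟩
    (Finset.subset_insert y W) (Finset.mem_insert_self y W))

variable [Fintype V]

lemma card_freeOn_lt_of_isClique (hr : 3 ≤ r) (hcl : G.IsClique (A : Set V)) (hA : r < A.card)
    (h5 : 5 ≤ A.card) : (freeOn G (r + 1) A).card < 2 ^ turanNum r A.card := by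
  induction hn : A.card generalizing A with
  | zero => omega
  | succ n ih =>
    rcases (show r = n ∨ r = 3 ∧ n = 4 ∨ r < n ∧ 5 ≤ n by omega) with rfl | ⟨rfl, rfl⟩ | ⟨hrn, h5n⟩
    · have hlt := two_mul_card_freeOn_lt (hn ▸ h5) hn hcl
      rw [← turanNum_succ_self (by omega), pow_succ] at hlt
      omega
    · rw [show turanNum 3 (4 + 1) = 8 from (turanNum_add_self 3 2).trans
        (by rw [turanNum_eq_choose_two (by norm_num)]; rfl)]
      exact card_freeOn_four_lt_of_card_eq_five hn hcl
    · obtain ⟨y, B, rfl, hB, hclB, hy⟩ := exists_insert_of_isClique hn hcl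
      obtain ⟨j, rfl⟩ := Nat.exists_eq_add_of_le hrn.le
      obtain ⟨c, hc, hc'⟩ := exists_turanNum_add_eq (by omega) (r := r) (r + j) 1
      rw [mul_one] at hc'
      calc (freeOn G (r + 1) (insert y B)).card
          ≤ (freeOn G (r + 1) B).card * ((j + 3) * 2 ^ (r - 2)) :=
            card_freeOn_insert_le_mul fun D hD ↦ by
              convert card_freeExt_insert_le_of_mem _ _ hclB hy hD using 3 <;> omega
        _ < 2 ^ turanNum r (r + j) * 2 ^ c :=
            Nat.mul_lt_mul_of_lt_of_le (ih hclB (hB ▸ hrn) (hB ▸ h5n) hB)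
              (add_three_mul_two_pow_le hr (by omega) hc') (by positivity)
        _ = 2 ^ turanNum r (r + j + 1) := by
            rw [← pow_add, hc, turanNum_eq_choose_two (n := 1) (by omega)]; rfl

lemma card_freeOn_lt_of_five_le_card (hr : 3 ≤ r) (hWA : W ⊆ A) (hcl : G.IsClique (W : Set V))
    (hrW : r < W.card) (h5 : 5 ≤ W.card) (hW : ∀ y ∈ A \ W, ∃ x ∈ W, ¬ G.Adj y x)
    (hB : (freeOn G (r + 1) (A \ W)).card ≤ 2 ^ turanNum r (A \ W).card ∨
      r = 3 ∧ (A \ W).card = 4 ∧ (freeOn G (r + 1) (A \ W)).card ≤ 40) :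
    (freeOn G (r + 1) A).card < 2 ^ turanNum r A.card := by
  obtain ⟨c, hc, hc'⟩ := exists_turanNum_add_eq (by omega) (r := r) (A \ W).card W.card
  obtain ⟨j, hj⟩ := Nat.exists_eq_add_of_le hrW.le
  have hrest : (freeOn G (r + 1) (A \ W)).card * ((j + 2) * 2 ^ (r - 2)) ^ (A \ W).card ≤
      2 ^ (turanNum r (A \ W).card + c) := by
    rw [hj] at hc'
    rcases hB with hB | ⟨rfl, hm, hB⟩
    · rw [pow_add]
      exact Nat.mul_le_mul hB (add_two_mul_two_pow_pow_le hr (by omega) hc')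
    · have hturan : turanNum 3 4 + 1 = 6 := turanNum_succ_self three_ne_zero
      rw [hm] at hc' ⊢
      rw [show turanNum 3 4 = 5 by omega]
      exact (Nat.mul_le_mul_right _ hB).trans (forty_mul_pow_four_le (by omega) (by omega))
  calc (freeOn G (r + 1) A).card
      ≤ (freeOn G (r + 1) W).card *
          ((freeOn G (r + 1) (A \ W)).card * ((j + 2) * 2 ^ (r - 2)) ^ (A \ W).card) :=
        card_freeOn_le_mul_pow hWA fun D hD y hy ↦ by
          obtain ⟨x, hx, hyx⟩ := hW y hy
          convert card_freeExt_insert_le_of_not_adj _ hcl hx hyx _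
            ((isOrientationOn_of_mem_freeOn hD).isTournOn subset_rfl hcl) using 3 <;> omega
    _ < 2 ^ turanNum r W.card * 2 ^ (turanNum r (A \ W).card + c) :=
        Nat.mul_lt_mul_of_lt_of_le (card_freeOn_lt_of_isClique hr hcl hrW h5) hrest (by positivity)
    _ = 2 ^ turanNum r A.card := by
        rw [← Finset.card_sdiff_add_card_eq_card hWA, hc, ← pow_add]
        ring_nf

lemma card_freeOn_lt_of_card_eq_four (hWA : W ⊆ A) (hcl : G.IsClique (W : Set V))
    (hW4 : W.card = 4) (hne : (A \ W).Nonempty) (hW : ∀ y ∈ A \ W, ∃ x ∈ W, ¬ G.Adj y x)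
    (hB : (freeOn G 4 (A \ W)).card ≤ 2 ^ turanNum 3 (A \ W).card ∨
      (A \ W).card = 4 ∧ (freeOn G 4 (A \ W)).card ≤ 40) :
    (freeOn G 4 A).card < 2 ^ turanNum 3 A.card := by
  have hturan : turanNum 3 4 + 1 = 6 := turanNum_succ_self three_ne_zero
  obtain ⟨c, hc, hc'⟩ := exists_turanNum_add_eq three_ne_zero (A \ W).card W.card
  rw [Finset.card_sdiff_add_card_eq_card hWA, hW4, show turanNum 3 4 = 5 by omega] at hc
  rw [hW4] at hc'
  obtain ⟨y, hy⟩ := hne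
  have hle : (freeOn G 4 A).card ≤ 224 * ((freeOn G 4 (A \ W)).card * 6 ^ ((A \ W).card - 1)) := by
    refine (card_freeOn_le_insert_mul_pow hWA hy fun D hD z hz ↦ ?_).trans
      (Nat.mul_le_mul_right _ (card_freeOn_insert_four_le hW4 hcl (Finset.mem_sdiff.1 hy).2
        (hW y hy)))
    obtain ⟨x, hx, hzx⟩ := hW z hz
    refine (card_freeExt_insert_le_of_not_adj (by norm_num) hcl hx hzx (by omega)
      ((isOrientationOn_of_mem_freeOn hD).isTournOn subset_rfl hcl)).trans_eq ?_
    simp [hW4]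
  rw [hc]
  rcases hB with hB | ⟨hm, hB⟩
  · calc (freeOn G 4 A).card
        ≤ 2 ^ turanNum 3 (A \ W).card * 2 ^ 5 * (7 * 6 ^ ((A \ W).card - 1)) := by
          refine hle.trans ((Nat.mul_le_mul_left _ (Nat.mul_le_mul_right _ hB)).trans_eq ?_)
          ring
      _ < 2 ^ turanNum 3 (A \ W).card * 2 ^ 5 * 2 ^ c := by
          gcongr
          exact seven_mul_six_pow_lt (Finset.card_pos.2 ⟨y, hy⟩).ne' (by omega)
      _ = 2 ^ (turanNum 3 (A \ W).card + 5 + c) := by rw [pow_add, pow_add]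
  · rw [hm] at hle hc' ⊢
    calc (freeOn G 4 A).card ≤ 224 * (40 * 6 ^ (4 - 1)) :=
          hle.trans (Nat.mul_le_mul_left _ (Nat.mul_le_mul_right _ hB))
      _ < 2 ^ 21 := by norm_num
      _ ≤ 2 ^ (turanNum 3 4 + 5 + c) := Nat.pow_le_pow_right two_pos (by omega)

lemma card_freeOn_lt_of_not_cliqueFreeOn (hr : 3 ≤ r) (hA : r = 3 → A.card ≠ 4)
    (hfree : ¬ G.CliqueFreeOn A (r + 1)) :
    (freeOn G (r + 1) A).card < 2 ^ turanNum r A.card := by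
  induction A using Finset.strongInduction with
  | H A ih =>
    obtain ⟨S, hSA, hS⟩ := exists_isNClique_of_not_cliqueFreeOn hfree
    obtain ⟨W, hWA, hSW, hcl, hW⟩ := exists_maximal_isClique hSA hS.isClique
    have hcard : r < W.card := hS.card_eq.ge.trans (Finset.card_le_card hSW)
    have hss : A \ W ⊂ A := Finset.sdiff_ssubset hWA (Finset.card_pos.1 hcard.pos)
    have hB : (freeOn G (r + 1) (A \ W)).card ≤ 2 ^ turanNum r (A \ W).card ∨
        r = 3 ∧ (A \ W).card = 4 ∧ (freeOn G (r + 1) (A \ W)).card ≤ 40 := by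
      by_cases hAW : G.CliqueFreeOn (A \ W : Finset V) (r + 1)
      · exact .inl (card_freeOn_le_of_cliqueFreeOn hAW)
      by_cases h34 : r = 3 → (A \ W).card ≠ 4
      · exact .inl (ih _ hss h34 hAW).le
      push Not at h34
      obtain ⟨rfl, h4⟩ := h34
      obtain ⟨T, hT, hTcl⟩ := exists_isNClique_of_not_cliqueFreeOn hAW
      have hTeq := Finset.eq_of_subset_of_card_le hT (h4.trans hTcl.card_eq.symm).le
      exact .inr ⟨rfl, h4, card_freeOn_four_le h4 (hTeq ▸ hTcl.isClique)⟩
    rcases le_or_gt 5 W.card with h5 | h5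
    · exact card_freeOn_lt_of_five_le_card hr hWA hcl hcard h5 hW hB
    · obtain rfl : r = 3 := by omega
      have hne : A ≠ W := by
        rintro rfl
        exact hA rfl (by omega)
      exact card_freeOn_lt_of_card_eq_four hWA hcl (by omega)
        (Finset.sdiff_nonempty.2 fun h ↦ hne (h.antisymm hWA)) hW (hB.imp_right And.right)

end MainBound

section ExtremalGraphs

variable {G : SimpleGraph V} {k r : ℕ}

lemma IsStrongOn.isStrongTourn {S : Finset V} {D : V → V → Prop} (hD : IsStrongOn D S)
    (e : Fin k ≃ S) {T : (⊤ : SimpleGraph (Fin k)).Orient}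
    (hT : ∀ i j, T.1 i j ↔ D (e i) (e j)) : IsStrongTourn T := by
  intro i j
  have hpath : ∀ v, Relation.ReflTransGen (restrictOn D S) (e i) v →
      ∀ hv : v ∈ S, Relation.ReflTransGen T.1 i (e.symm ⟨v, hv⟩) := fun v h ↦ by
    induction h with
    | refl => simp [Relation.ReflTransGen.refl]
    | tail _ h ih => exact fun hv ↦ (ih h.2.1).tail ((hT _ _).2 (by simpa using h.1))
  simpa using hpath (e j) (hD (e i) (e i).2 (e j) (e j).2) (e j).2

lemma freeOrient_of_cliqueFree (hG : G.CliqueFree k) (D : G.Orient) : FreeOrient (SFam k) D := by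
  rintro _ T ⟨rfl, -⟩ ⟨φ, hφ, h⟩
  refine SimpleGraph.IsContained.not_cliqueFree ⟨⟨⟨φ, fun {i j} hij ↦ ?_⟩, hφ⟩⟩ hG
  by_cases hT : T.1 i j
  · exact D.2.1 _ _ (h _ _ hT)
  · exact (D.2.1 _ _ (h _ _ ((T.2.2 j i hij.symm).2 hT))).symm

lemma numOrient_of_cliqueFree [Fintype G.edgeSet] (hG : G.CliqueFree k) :
    numOrient G (SFam k) = 2 ^ G.edgeFinset.card := by
  rw [← card_orient, numOrient]
  exact Nat.card_congr (Equiv.subtypeUnivEquiv (freeOrient_of_cliqueFree hG))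

lemma numOrient_turanGraph (hr : r ≠ 0) (n : ℕ) :
    numOrient (SimpleGraph.turanGraph n r) (SFam (r + 1)) = 2 ^ turanNum r n :=
  numOrient_of_cliqueFree (SimpleGraph.turanGraph_cliqueFree hr.bot_lt)

variable [Fintype V]

lemma FreeOrient.mem_freeOn {D : G.Orient} (hD : FreeOrient (SFam k) D) :
    D.1 ∈ freeOn G k Finset.univ := by
  refine _root_.mem_freeOn.2 ⟨⟨fun u v h ↦ ⟨D.2.1 u v h, by simp, by simp⟩,
    fun u _ v _ h ↦ D.2.2 u v h⟩, fun S _ hS hstrong ↦ ?_⟩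
  let e : Fin k ≃ S := (Finset.equivFinOfCardEq hS.card_eq).symm
  have hinj : Function.Injective fun i ↦ (e i : V) := Subtype.val_injective.comp e.injective
  let T : (⊤ : SimpleGraph (Fin k)).Orient :=
    ⟨fun i j ↦ D.1 (e i) (e j), fun i j h hij ↦ (D.2.1 _ _ h).ne (by rw [hij]),
      fun i j h ↦ D.2.2 _ _ (hS.isClique (e i).2 (e j).2 (hinj.ne h))⟩
  exact hD k T ⟨rfl, hstrong.isStrongTourn e fun _ _ ↦ .rfl⟩
    ⟨fun i ↦ e i, hinj, fun _ _ h ↦ h⟩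

lemma numOrient_le_card_freeOn (G : SimpleGraph V) (k : ℕ) :
    numOrient G (SFam k) ≤ (freeOn G k Finset.univ).card := by
  rw [numOrient, ← Nat.card_eq_finsetCard]
  exact Nat.card_le_card_of_injective
    (fun D : {D : G.Orient // FreeOrient (SFam k) D} ↦
      (⟨D.1.1, D.2.mem_freeOn⟩ : freeOn G k Finset.univ))
    fun D E h ↦ Subtype.ext (Subtype.ext (by simpa using h))

lemma numOrient_lt_of_not_cliqueFree (hr : 3 ≤ r) (hV : r = 3 → Fintype.card V ≠ 4)
    (hG : ¬ G.CliqueFree (r + 1)) :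
    numOrient G (SFam (r + 1)) < 2 ^ turanNum r (Fintype.card V) := by
  rw [← Finset.card_univ] at hV ⊢
  refine (numOrient_le_card_freeOn G _).trans_lt (card_freeOn_lt_of_not_cliqueFreeOn hr hV ?_)
  rwa [Finset.coe_univ, SimpleGraph.cliqueFreeOn_univ]

lemma numOrient_le_two_pow_turanNum (hr : 3 ≤ r) (hV : r = 3 → Fintype.card V ≠ 4)
    (G : SimpleGraph V) : numOrient G (SFam (r + 1)) ≤ 2 ^ turanNum r (Fintype.card V) := by
  by_cases hG : G.CliqueFree (r + 1)
  · rw [numOrient_of_cliqueFree hG]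
    exact Nat.pow_le_pow_right two_pos (card_edgeFinset_le_turanNum hG)
  · exact (numOrient_lt_of_not_cliqueFree hr hV hG).le

lemma nonempty_iso_turanGraph_of_card_edgeFinset_eq [Fintype G.edgeSet]
    (hG : G.CliqueFree (r + 1)) (hcard : G.edgeFinset.card = turanNum r (Fintype.card V)) :
    Nonempty (G ≃g SimpleGraph.turanGraph (Fintype.card V) r) := by
  have hmax : G.IsTuranMaximal r := ⟨hG, fun H _ hH ↦ by
    convert (card_edgeFinset_le_turanNum hH).trans_eq hcard.symm⟩
  exact hmax.nonempty_iso_turanGraph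

lemma nonempty_iso_turanGraph_of_numOrient_eq (hr : 3 ≤ r) (hV : r = 3 → Fintype.card V ≠ 4)
    (hG : numOrient G (SFam (r + 1)) = 2 ^ turanNum r (Fintype.card V)) :
    Nonempty (G ≃g SimpleGraph.turanGraph (Fintype.card V) r) := by
  have hfree : G.CliqueFree (r + 1) := by
    by_contra h
    exact (numOrient_lt_of_not_cliqueFree hr hV h).ne hG
  rw [numOrient_of_cliqueFree hfree] at hG
  exact nonempty_iso_turanGraph_of_card_edgeFinset_eq hfree (Nat.pow_right_injective le_rfl hG)

end ExtremalGraphs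

/-- For `n ≥ k ≥ 4` with `n ≥ 5` or `k ≥ 5`, the maximum number of orientations
of an `n`-vertex graph with no strongly connected `K_k` is `2 ^ t_{k-1}(n)`,
attained only by the Turán graph `T_{k-1}(n)`. -/
theorem max_SFam_free_orientations (n k : ℕ) (hk : 4 ≤ k) (hkn : k ≤ n)
    (h5 : 5 ≤ n ∨ 5 ≤ k) :
    maxOrient n (SFam k) = 2 ^ turanNum (k - 1) n ∧
    ∀ G : SimpleGraph (Fin n), numOrient G (SFam k) = 2 ^ turanNum (k - 1) n →
      Nonempty (G ≃g SimpleGraph.turanGraph n (k - 1)) := by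
  obtain ⟨r, rfl⟩ := Nat.exists_eq_add_of_le' (show 1 ≤ k by omega)
  rw [Nat.add_sub_cancel]
  have hr : 3 ≤ r := by omega
  have hn : r = 3 → Fintype.card (Fin n) ≠ 4 := by rw [Fintype.card_fin]; omega
  constructor
  · refine IsGreatest.csSup_eq ⟨⟨_, numOrient_turanGraph (by omega) n⟩, ?_⟩
    rintro _ ⟨G, rfl⟩
    simpa using numOrient_le_two_pow_turanNum hr hn G
  · intro G hG
    have hiso := nonempty_iso_turanGraph_of_numOrient_eq (G := G) hr hn (by simpa using hG)
    rwa [Fintype.card_fin] at hiso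
end
end

section
/- S_4(4) = 40, and the complete graph K_4 is the unique 4-vertex graph G with S_4(G) = 40 (i.e., the unique 𝓢_4-extremal graph on 4 vertices). -/
open scoped Classical

noncomputable section

universe u

variable {V : Type u}

/-!
A graph with `e` edges has `2 ^ e` orientations, so a non-complete graph on four vertices has at
most `2 ^ 5 = 32` of them. It remains to count the tournaments on four vertices that are not
strongly connected. In such a tournament some nonempty proper vertex set has no outgoing arc, and
either it or its complement has at most two vertices; on at most five vertices this forces a sink
or a source, and conversely a source or a sink rules out strong connectivity. A tournament has at
most one source and at most one sink, and fixing one of them fixes the direction of its edges and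
nothing else. By inclusion-exclusion the count is `4 * 2 ^ 3 + 4 * 2 ^ 3 - 4 * 3 * 2 = 40`.
-/

theorem ncard_biUnion_of_forall_ncard_eq {ι α : Type*} [Finite α] {t : Finset ι} {s : ι → Set α}
    {c : ℕ} (hs : (t : Set ι).PairwiseDisjoint s) (hc : ∀ i ∈ t, (s i).ncard = c) :
    (⋃ i ∈ t, s i).ncard = t.card * c := by
  have := t.finite_toSet.ncard_biUnion (fun i _ => (s i).toFinite) hs
  rw [finsum_mem_coe_finset, Finset.sum_congr rfl hc, Finset.sum_const] at this
  simpa using this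

/-- A vertex with no incoming arc, for an arc relation `D`. Isolated vertices count as sources. -/
def IsSource (D : V → V → Prop) (v : V) : Prop := ∀ u, ¬ D u v

/-- A vertex with no outgoing arc, for an arc relation `D`. Isolated vertices count as sinks. -/
def IsSink (D : V → V → Prop) (v : V) : Prop := ∀ u, ¬ D v u

section Counting

variable (G : SimpleGraph V)

/-- For a linearly ordered vertex set, an orientation is encoded by the predicate on edges telling
which of them point upwards. -/
def orientEquivEdgePred [LinearOrder V] : G.Orient ≃ (G.edgeSet → Prop) where
  toFun D e := D.1 e.1.inf e.1.sup
  invFun f := ⟨fun u v => ∃ h : G.Adj u v, u < v ↔ f ⟨s(u, v), h⟩, fun _ _ h => h.1, by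
    intro u v huv
    have hvu : (⟨s(v, u), huv.symm⟩ : G.edgeSet) = ⟨s(u, v), huv⟩ := Subtype.ext Sym2.eq_swap
    have hlt : u < v ↔ ¬ v < u := ⟨not_lt_of_gt, huv.ne.lt_or_gt.resolve_right⟩
    simp only [huv, huv.symm, hvu, exists_true_left]
    tauto⟩
  left_inv D := by
    ext u v
    by_cases huv : G.Adj u v
    · rcases huv.ne.lt_or_gt with h | h
      · simp [huv, h, h.le]
      · simp [huv, h.le, h.not_gt, D.2.2 u v huv]
    · simp [huv, mt (D.2.1 u v) huv]
  right_inv f := by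
    ext ⟨e, he⟩
    induction e with | _ u v
    have huv : G.Adj u v := he
    rcases huv.ne.lt_or_gt with h | h
    · simp [huv, h, h.le]
    · simp [huv.symm, h, h.le, Sym2.eq_swap (a := v)]

theorem card_orient_s1 [Finite G.edgeSet] : Nat.card G.Orient = 2 ^ G.edgeSet.ncard := by
  obtain ⟨_, -⟩ := exists_wellFoundedLT V
  cases nonempty_fintype G.edgeSet
  simp [Nat.card_congr (orientEquivEdgePred G)]

theorem numOrient_le_two_pow [Finite G.edgeSet] (F : TournFamily) :
    numOrient G F ≤ 2 ^ G.edgeSet.ncard := by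
  have : Finite G.Orient := Nat.finite_of_card_ne_zero (by simp [card_orient_s1])
  exact card_orient_s1 G ▸ Nat.card_le_card_of_injective _ Subtype.val_injective

/-- Reversal of all arcs. -/
def orientReverse : G.Orient ≃ G.Orient where
  toFun D := ⟨flip D.1, fun u v h => (D.2.1 v u h).symm, fun u v h => D.2.2 v u h.symm⟩
  invFun D := ⟨flip D.1, fun u v h => (D.2.1 v u h).symm, fun u v h => D.2.2 v u h.symm⟩
  left_inv _ := rfl
  right_inv _ := rfl

/-- Deleting the edges at a source `v` loses no information, since they all point away from `v`. -/
def orientSourceEquiv (v : V) :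
    {D : G.Orient // IsSource D.1 v} ≃ (G.deleteIncidenceSet v).Orient where
  toFun D := ⟨fun x y => x ≠ v ∧ D.1.1 x y, by
    simp only [SimpleGraph.deleteIncidenceSet_adj]
    refine ⟨fun x y h => ⟨D.1.2.1 x y h.2, h.1, ?_⟩, fun x y h => ?_⟩
    · rintro rfl
      exact D.2 x h.2
    · simpa [h.2.1, h.2.2] using D.1.2.2 x y h.1⟩
  invFun D := ⟨⟨fun x y => D.1 x y ∨ x = v ∧ G.Adj x y, by
    have hadj := D.2.1
    have hdir := D.2.2
    simp only [SimpleGraph.deleteIncidenceSet_adj] at hadj hdir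
    refine ⟨fun x y => ?_, fun x y h => ?_⟩
    · grind
    · grind [h.symm, h.ne]⟩, fun x => by
    have hadj := D.2.1 x v
    simp only [SimpleGraph.deleteIncidenceSet_adj] at hadj
    grind [G.irrefl (v := v)]⟩
  left_inv D := by
    ext x y
    have hout : G.Adj v y → D.1.1 v y := fun h => (D.1.2.2 v y h).2 (D.2 y)
    grind [D.1.2.1 x y]
  right_inv D := by
    ext x y
    have hadj := D.2.1 x y
    simp only [SimpleGraph.deleteIncidenceSet_adj] at hadj
    grind

variable [Finite V]

theorem ncard_orient_isSource (v : V) :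
    {D : G.Orient | IsSource D.1 v}.ncard = 2 ^ (G.deleteIncidenceSet v).edgeSet.ncard :=
  (Nat.card_congr (orientSourceEquiv G v)).trans (card_orient_s1 _)

theorem ncard_orient_isSink (v : V) :
    {D : G.Orient | IsSink D.1 v}.ncard = 2 ^ (G.deleteIncidenceSet v).edgeSet.ncard :=
  (Nat.card_congr ((orientReverse G).subtypeEquiv fun _ => Iff.rfl)).trans
    (ncard_orient_isSource G v)

theorem ncard_orient_isSource_and_isSink {v w : V} (hvw : v ≠ w) :
    {D : G.Orient | IsSource D.1 v ∧ IsSink D.1 w}.ncard =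
      2 ^ ((G.deleteIncidenceSet v).deleteIncidenceSet w).edgeSet.ncard := by
  have sink_iff (D : {D : G.Orient // IsSource D.1 v}) :
      IsSink D.1.1 w ↔ IsSink (orientSourceEquiv G v D).1 w := by
    simp [IsSink, orientSourceEquiv, hvw.symm]
  have e : {D : G.Orient // IsSource D.1 v ∧ IsSink D.1 w} ≃
      {D : (G.deleteIncidenceSet v).Orient // IsSink D.1 w} :=
    (Equiv.subtypeSubtypeEquivSubtypeInter _ _).symm.trans
      ((orientSourceEquiv G v).subtypeEquiv sink_iff)
  exact (Nat.card_congr e).trans (ncard_orient_isSink _ w)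

end Counting

section CompleteGraph

theorem ncard_edgeSet_of_isClique_of_support_subset [Finite V] {G : SimpleGraph V} {s : Set V}
    (hs : G.IsClique s) (hsupp : G.support ⊆ s) : G.edgeSet.ncard = s.ncard.choose 2 := by
  cases nonempty_fintype V
  calc G.edgeSet.ncard = (G.induce s).edgeSet.ncard := by
        rw [Set.ncard_eq_toFinset_card', Set.ncard_eq_toFinset_card']
        exact (SimpleGraph.card_edgeFinset_induce_of_support_subset hsupp).symm
    _ = (⊤ : SimpleGraph s).edgeSet.ncard := by rw [SimpleGraph.induce_eq_top.2 hs]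
    _ = s.ncard.choose 2 := by
        rw [Set.ncard_eq_toFinset_card', ← SimpleGraph.edgeFinset,
          SimpleGraph.card_edgeFinset_top_eq_card_choose_two, Set.fintypeCard_eq_ncard]

theorem ncard_edgeSet_lt_of_ne_top [Finite V] {G : SimpleGraph V} (hG : G ≠ ⊤) :
    G.edgeSet.ncard < (Nat.card V).choose 2 := by
  have htop := ncard_edgeSet_of_isClique_of_support_subset (G := (⊤ : SimpleGraph V))
    (s := Set.univ) (fun _ _ _ _ h => h) (Set.subset_univ _)
  rw [← Set.ncard_univ, ← htop]
  exact Set.ncard_lt_ncard (SimpleGraph.edgeSet_ssubset_edgeSet.2 hG.lt_top)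

theorem numOrient_le_of_ne_top [Finite V] {G : SimpleGraph V} (hG : G ≠ ⊤) (F : TournFamily) :
    numOrient G F ≤ 2 ^ ((Nat.card V).choose 2 - 1) :=
  (numOrient_le_two_pow G F).trans <|
    Nat.pow_le_pow_right two_pos (Nat.le_sub_one_of_lt (ncard_edgeSet_lt_of_ne_top hG))

theorem ncard_edgeSet_top_deleteIncidenceSet [Finite V] (v : V) :
    ((⊤ : SimpleGraph V).deleteIncidenceSet v).edgeSet.ncard = (Nat.card V - 1).choose 2 := by
  rw [ncard_edgeSet_of_isClique_of_support_subset (s := {v}ᶜ), Set.ncard_compl, Set.ncard_singleton]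
  · intro x hx y hy hxy
    simp_all [SimpleGraph.deleteIncidenceSet_adj]
  · rintro x ⟨y, h⟩
    simp_all [SimpleGraph.deleteIncidenceSet_adj]

theorem ncard_edgeSet_top_deleteIncidenceSet_deleteIncidenceSet [Finite V] {v w : V}
    (hvw : v ≠ w) :
    (((⊤ : SimpleGraph V).deleteIncidenceSet v).deleteIncidenceSet w).edgeSet.ncard =
      (Nat.card V - 2).choose 2 := by
  rw [ncard_edgeSet_of_isClique_of_support_subset (s := {v, w}ᶜ), Set.ncard_compl,
    Set.ncard_pair hvw]
  · intro x hx y hy hxy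
    simp_all [SimpleGraph.deleteIncidenceSet_adj]
  · rintro x ⟨y, h⟩
    simp_all [SimpleGraph.deleteIncidenceSet_adj]

theorem IsSource.eq_of_top {D : (⊤ : SimpleGraph V).Orient} {v w : V} (hv : IsSource D.1 v)
    (hw : IsSource D.1 w) : v = w := by
  by_contra hvw
  exact hw v ((D.2.2 v w hvw).2 (hv w))

theorem IsSink.eq_of_top {D : (⊤ : SimpleGraph V).Orient} {v w : V} (hv : IsSink D.1 v)
    (hw : IsSink D.1 w) : v = w :=
  IsSource.eq_of_top (D := orientReverse ⊤ D) hv hw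

theorem IsSource.not_isSink_of_top [Nontrivial V] {D : (⊤ : SimpleGraph V).Orient} {v : V}
    (hv : IsSource D.1 v) : ¬ IsSink D.1 v := by
  intro hv'
  obtain ⟨w, hw⟩ := exists_ne v
  exact hv w ((D.2.2 w v hw).2 (hv' w))

theorem ncard_tournament_exists_isSource [Finite V] :
    {D : (⊤ : SimpleGraph V).Orient | ∃ v, IsSource D.1 v}.ncard =
      Nat.card V * 2 ^ (Nat.card V - 1).choose 2 := by
  cases nonempty_fintype V
  have hunion : {D : (⊤ : SimpleGraph V).Orient | ∃ v, IsSource D.1 v} =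
      ⋃ v ∈ Finset.univ, {D | IsSource D.1 v} := by
    ext
    simp
  rw [hunion, ncard_biUnion_of_forall_ncard_eq (c := 2 ^ (Nat.card V - 1).choose 2) ?_
    fun v _ => ?_]
  · simp
  · exact fun v _ w _ hvw => Set.disjoint_left.2 fun D hv hw => hvw (hv.eq_of_top hw)
  · rw [ncard_orient_isSource, ncard_edgeSet_top_deleteIncidenceSet]

theorem ncard_tournament_exists_isSink [Finite V] :
    {D : (⊤ : SimpleGraph V).Orient | ∃ v, IsSink D.1 v}.ncard =
      Nat.card V * 2 ^ (Nat.card V - 1).choose 2 :=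
  (Nat.card_congr ((orientReverse ⊤).subtypeEquiv fun _ => Iff.rfl)).trans
    ncard_tournament_exists_isSource

theorem ncard_tournament_exists_isSource_and_exists_isSink [Finite V] [Nontrivial V] :
    {D : (⊤ : SimpleGraph V).Orient | (∃ v, IsSource D.1 v) ∧ ∃ w, IsSink D.1 w}.ncard =
      Nat.card V * (Nat.card V - 1) * 2 ^ (Nat.card V - 2).choose 2 := by
  cases nonempty_fintype V
  have hunion : {D : (⊤ : SimpleGraph V).Orient | (∃ v, IsSource D.1 v) ∧ ∃ w, IsSink D.1 w} =
      ⋃ p ∈ Finset.univ.offDiag, {D | IsSource D.1 p.1 ∧ IsSink D.1 p.2} := by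
    ext D
    simp only [Set.mem_iUnion, Set.mem_ofPred_eq, Finset.mem_offDiag, Finset.mem_univ, true_and]
    constructor
    · rintro ⟨⟨v, hv⟩, w, hw⟩
      exact ⟨(v, w), fun hvw : v = w => hv.not_isSink_of_top (hvw ▸ hw), hv, hw⟩
    · rintro ⟨p, -, hv, hw⟩
      exact ⟨⟨p.1, hv⟩, p.2, hw⟩
  rw [hunion, ncard_biUnion_of_forall_ncard_eq (c := 2 ^ (Nat.card V - 2).choose 2) ?_
    fun p hp => ?_]
  · simp [Finset.offDiag_card, Nat.mul_sub]
  · exact fun p _ q _ hpq => Set.disjoint_left.2 fun D hp hq =>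
      hpq (Prod.ext (hp.1.eq_of_top hq.1) (hp.2.eq_of_top hq.2))
  · have hne : p.1 ≠ p.2 := (Finset.mem_offDiag.1 hp).2.2
    rw [ncard_orient_isSource_and_isSink ⊤ hne,
      ncard_edgeSet_top_deleteIncidenceSet_deleteIncidenceSet hne]

end CompleteGraph

section StrongConnectivity

variable {G : SimpleGraph V} {D : G.Orient}

theorem exists_isSink_of_closed_of_card_le_two {s : Finset V} (hs : s.Nonempty) (hcard : s.card ≤ 2)
    (hclosed : ∀ u ∈ s, ∀ v, D.1 u v → v ∈ s) : ∃ v, IsSink D.1 v := by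
  obtain ⟨a, ha⟩ := hs
  by_contra! hsink
  obtain ⟨b, hab⟩ : ∃ b, D.1 a b := by simpa [IsSink] using hsink a
  obtain ⟨c, hbc⟩ : ∃ c, D.1 b c := by simpa [IsSink] using hsink b
  have hb := hclosed a ha b hab
  have hc := hclosed b hb c hbc
  have hadj := D.2.1 a b hab
  have hac : a ≠ c := by
    rintro rfl
    exact (D.2.2 a b hadj).1 hab hbc
  have : 2 < s.card :=
    Finset.two_lt_card.2 ⟨a, ha, b, hb, c, hc, hadj.ne, hac, (D.2.1 b c hbc).ne⟩
  omega

theorem exists_isSource_or_exists_isSink_of_not_forall_reflTransGen [Fintype V]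
    (hV : Fintype.card V ≤ 5) (hD : ¬ ∀ u v, Relation.ReflTransGen D.1 u v) :
    (∃ v, IsSource D.1 v) ∨ ∃ v, IsSink D.1 v := by
  push Not at hD
  obtain ⟨u, v, huv⟩ := hD
  let s : Finset V := {w | Relation.ReflTransGen D.1 u w}
  have hclosed : ∀ x ∈ s, ∀ y, D.1 x y → y ∈ s := by
    simpa [s] using fun x hx y hxy => hx.tail hxy
  have hcompl : s.card + sᶜ.card ≤ 5 := (Finset.card_add_card_compl s).trans_le hV
  rcases le_or_gt s.card 2 with hs | hs
  · have hu : u ∈ s := by simp [s, Relation.ReflTransGen.refl]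
    exact .inr (exists_isSink_of_closed_of_card_le_two ⟨u, hu⟩ hs hclosed)
  · refine .inl (exists_isSink_of_closed_of_card_le_two (D := orientReverse G D) (s := sᶜ)
      ⟨v, by simpa [s]⟩ (by omega) fun x hx y hyx => ?_)
    simp only [Finset.mem_compl] at hx ⊢
    exact fun hy => hx (hclosed y hy x hyx)

theorem IsSource.not_forall_reflTransGen [Nontrivial V] {D : V → V → Prop} {v : V}
    (hv : IsSource D v) : ¬ ∀ u w, Relation.ReflTransGen D u w := by
  intro h
  obtain ⟨w, hw⟩ := exists_ne v
  obtain heq | ⟨u, -, huv⟩ := (h w v).cases_tail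
  exacts [hw heq.symm, hv u huv]

theorem IsSink.not_forall_reflTransGen [Nontrivial V] {D : V → V → Prop} {v : V}
    (hv : IsSink D v) : ¬ ∀ u w, Relation.ReflTransGen D u w := fun h =>
  IsSource.not_forall_reflTransGen (D := flip D) hv fun u w => Relation.reflTransGen_swap.2 (h w u)

theorem not_forall_reflTransGen_iff [Nontrivial V] [Fintype V] (D : G.Orient)
    (hV : Fintype.card V ≤ 5) :
    (¬ ∀ u v, Relation.ReflTransGen D.1 u v) ↔ (∃ v, IsSource D.1 v) ∨ ∃ v, IsSink D.1 v := by
  refine ⟨exists_isSource_or_exists_isSink_of_not_forall_reflTransGen hV, ?_⟩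
  rintro (⟨v, hv⟩ | ⟨v, hv⟩)
  exacts [hv.not_forall_reflTransGen, hv.not_forall_reflTransGen]

end StrongConnectivity

theorem freeOrient_SFam_top_iff {k : ℕ} (D : (⊤ : SimpleGraph (Fin k)).Orient) :
    FreeOrient (SFam k) D ↔ ¬ IsStrongTourn D := by
  constructor
  · exact fun h hD => h k D ⟨rfl, hD⟩ ⟨id, Function.injective_id, fun _ _ => id⟩
  · rintro hD m T ⟨rfl, hT⟩ ⟨φ, hφ, hcopy⟩
    have hsurj := Finite.surjective_of_injective hφ
    exact hD (hsurj.forall₂.2 fun a b => (hT a b).lift φ hcopy)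

theorem numOrient_top_SFam_add {n : ℕ} (hn₂ : 2 ≤ n) (hn₅ : n ≤ 5) :
    numOrient (⊤ : SimpleGraph (Fin n)) (SFam n) + n * (n - 1) * 2 ^ (n - 2).choose 2 =
      2 * n * 2 ^ (n - 1).choose 2 := by
  have : Nontrivial (Fin n) := Fin.nontrivial_iff_two_le.2 hn₂
  have hfree : {D : (⊤ : SimpleGraph (Fin n)).Orient | FreeOrient (SFam n) D} =
      {D | ∃ v, IsSource D.1 v} ∪ {D | ∃ v, IsSink D.1 v} := by
    ext D
    exact (freeOrient_SFam_top_iff D).trans (not_forall_reflTransGen_iff D (by simpa))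
  have hincl := Set.ncard_union_add_ncard_inter
    {D : (⊤ : SimpleGraph (Fin n)).Orient | ∃ v, IsSource D.1 v} {D | ∃ v, IsSink D.1 v}
  rw [← hfree, ← Set.ofPred_and, ncard_tournament_exists_isSource, ncard_tournament_exists_isSink,
    ncard_tournament_exists_isSource_and_exists_isSink, Nat.card_fin] at hincl
  rw [two_mul, add_mul]
  exact hincl

theorem numOrient_top_SFam_four : numOrient (⊤ : SimpleGraph (Fin 4)) (SFam 4) = 40 := by
  have h : numOrient (⊤ : SimpleGraph (Fin 4)) (SFam 4) + 4 * 3 * 2 ^ 1 = 2 * 4 * 2 ^ 3 :=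
    numOrient_top_SFam_add (by norm_num) (by norm_num)
  omega

theorem numOrient_four_le_of_ne_top {G : SimpleGraph (Fin 4)} (hG : G ≠ ⊤) (F : TournFamily) :
    numOrient G F ≤ 32 := by
  simpa [Nat.choose] using numOrient_le_of_ne_top hG F

/-- `S_4(4) = 40`, and `K_4` is the unique `4`-vertex graph with `40`
`𝓢₄`-free orientations. -/
theorem max_SFam_four_vertices :
    maxOrient 4 (SFam 4) = 40 ∧
    ∀ G : SimpleGraph (Fin 4), numOrient G (SFam 4) = 40 →
      Nonempty (G ≃g (⊤ : SimpleGraph (Fin 4))) := by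
  refine ⟨IsGreatest.csSup_eq ⟨⟨⊤, numOrient_top_SFam_four⟩, ?_⟩, fun G hG => ?_⟩
  · rintro _ ⟨G, rfl⟩
    obtain rfl | hG := eq_or_ne G ⊤
    · exact numOrient_top_SFam_four.le
    · exact (numOrient_four_le_of_ne_top hG _).trans (by norm_num)
  · obtain rfl | hne := eq_or_ne G ⊤
    · exact ⟨SimpleGraph.Iso.refl⟩
    · have hle := numOrient_four_le_of_ne_top hne (SFam 4)
      omega
end
end

section
/- Let 𝓕 be a family of tournaments, let G be a finite simple graph, and let H be an induced subgraph of G such that S = V(G) \ V(H) is an independent set in G. Then for every 𝓕-free orientation H⃗ of H, the number of ways to orient the edges in E(G) \ E(H) extending H⃗ to an 𝓕-free orientation of G equals ∏_{v∈S} c_𝓕(v, H⃗). -/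
open scoped Classical

noncomputable section

universe u

variable {V : Type u}

/-- `c_F(G ∣ H⃗)`: the number of ways to orient the edges of `G` outside the induced
subgraph on `A` extending the orientation `H` to an `F`-free orientation of `G`. -/
def extFull (G : SimpleGraph V) (F : TournFamily) (A : Set V)
    (H : (G.induce A).Orient) : ℕ :=
  Nat.card {D : G.Orient // FreeOrient F D ∧
    ∀ (a b : V) (ha : a ∈ A) (hb : b ∈ A), (D.1 a b ↔ H.1 ⟨a, ha⟩ ⟨b, hb⟩)}

/-- `c_F(v, H⃗)`: the number of ways to orient the edges of `G` between `v` and `A`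
so that the resulting orientation of the induced subgraph on `A ∪ {v}`, extending the
orientation `H` of the induced subgraph on `A`, is `F`-free. -/
def extVert (G : SimpleGraph V) (F : TournFamily) (A : Set V) (v : V)
    (H : (G.induce A).Orient) : ℕ :=
  Nat.card {D : (G.induce (insert v A)).Orient // FreeOrient F D ∧
    ∀ (a b : V) (ha : a ∈ A) (hb : b ∈ A),
      (D.1 ⟨a, Set.mem_insert_of_mem v ha⟩ ⟨b, Set.mem_insert_of_mem v hb⟩ ↔
        H.1 ⟨a, ha⟩ ⟨b, hb⟩)}

/-!
A copy of a tournament spans a clique of `G`, and a clique meets the independent set `S` in at most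
one vertex. So every clique, in particular every edge, lies in `Sᶜ` or in `insert v Sᶜ` for some
`v ∈ S`. Since these sets pairwise intersect in `Sᶜ`, arbitrary extensions of `H` to the sets
`insert v Sᶜ` glue to a unique orientation of `G`, which is `F`-free as soon as `H` and the
extensions are.
-/

/-- The restriction of an orientation of `G` to the subgraph induced on `B`. -/
def restrictOrient {G : SimpleGraph V} (D : G.Orient) (B : Set V) : (G.induce B).Orient :=
  ⟨fun a b => D.1 a b, fun a b => D.2.1 a b, fun a b => D.2.2 a b⟩

lemma restrictOrient_eq_iff {G : SimpleGraph V} {D : G.Orient} {B : Set V}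
    {E : (G.induce B).Orient} :
    restrictOrient D B = E ↔
      ∀ (a b : V) (ha : a ∈ B) (hb : b ∈ B), (D.1 a b ↔ E.1 ⟨a, ha⟩ ⟨b, hb⟩) := by
  refine ⟨?_, fun h => ?_⟩
  · rintro rfl _ _ _ _
    rfl
  · ext a b
    exact h a b a.2 b.2

section Cover

variable {G : SimpleGraph V} {ι : Type*} {B : ι → Set V}

lemma eq_of_forall_restrictOrient_eq (hB : ∀ u v, G.Adj u v → ∃ i, u ∈ B i ∧ v ∈ B i)
    {D E : G.Orient} (h : ∀ i, restrictOrient D (B i) = restrictOrient E (B i)) : D = E := by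
  ext u v
  by_cases huv : G.Adj u v
  · obtain ⟨i, hu, hv⟩ := hB u v huv
    exact restrictOrient_eq_iff.1 (h i) u v hu hv
  · exact iff_of_false (huv ∘ D.2.1 u v) (huv ∘ E.2.1 u v)

lemma exists_forall_restrictOrient_eq (hB : ∀ u v, G.Adj u v → ∃ i, u ∈ B i ∧ v ∈ B i)
    (f : ∀ i, (G.induce (B i)).Orient)
    (hf : ∀ i j a b (hai : a ∈ B i) (hbi : b ∈ B i) (haj : a ∈ B j) (hbj : b ∈ B j),
      (f i).1 ⟨a, hai⟩ ⟨b, hbi⟩ ↔ (f j).1 ⟨a, haj⟩ ⟨b, hbj⟩) :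
    ∃ D : G.Orient, ∀ i, restrictOrient D (B i) = f i := by
  let R (a b : V) : Prop := ∃ i, ∃ (ha : a ∈ B i) (hb : b ∈ B i), (f i).1 ⟨a, ha⟩ ⟨b, hb⟩
  have hR (i : ι) (a b : V) (ha : a ∈ B i) (hb : b ∈ B i) :
      R a b ↔ (f i).1 ⟨a, ha⟩ ⟨b, hb⟩ :=
    ⟨fun ⟨j, haj, hbj, h⟩ => (hf j i a b haj hbj ha hb).1 h, fun h => ⟨i, ha, hb, h⟩⟩
  have hR_adj (a b : V) : R a b → G.Adj a b := fun ⟨i, _, _, h⟩ => (f i).2.1 _ _ h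
  have hR_asymm (a b : V) (hab : G.Adj a b) : R a b ↔ ¬ R b a := by
    obtain ⟨i, ha, hb⟩ := hB a b hab
    rw [hR i a b ha hb, hR i b a hb ha]
    exact (f i).2.2 _ _ hab
  exact ⟨⟨R, hR_adj, hR_asymm⟩, fun i => restrictOrient_eq_iff.2 (hR i)⟩

lemma isClique_range_of_forall_imp {W : Type*} {T : (⊤ : SimpleGraph W).Orient} {D : G.Orient}
    {φ : W → V} (hφ : ∀ i j, T.1 i j → D.1 (φ i) (φ j)) : G.IsClique (Set.range φ) := by
  rintro _ ⟨i, rfl⟩ _ ⟨j, rfl⟩ hij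
  by_cases h : T.1 j i
  · exact (D.2.1 _ _ (hφ j i h)).symm
  · exact D.2.1 _ _ (hφ i j ((T.2.2 i j (ne_of_apply_ne φ hij)).2 h))

lemma containsCopy_iff_exists_restrictOrient (hB : ∀ s, G.IsClique s → ∃ i, s ⊆ B i)
    {D : G.Orient} {k : ℕ} {T : (⊤ : SimpleGraph (Fin k)).Orient} :
    ContainsCopy D T ↔ ∃ i, ContainsCopy (restrictOrient D (B i)) T := by
  constructor
  · rintro ⟨φ, hφ_inj, hφ⟩
    obtain ⟨i, hi⟩ := hB _ (isClique_range_of_forall_imp hφ)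
    exact ⟨i, Set.codRestrict φ (B i) fun x => hi ⟨x, rfl⟩, hφ_inj.codRestrict _, hφ⟩
  · rintro ⟨i, φ, hφ_inj, hφ⟩
    exact ⟨Subtype.val ∘ φ, Subtype.val_injective.comp hφ_inj, hφ⟩

lemma freeOrient_iff_forall_restrictOrient (hB : ∀ s, G.IsClique s → ∃ i, s ⊆ B i)
    {F : TournFamily} {D : G.Orient} :
    FreeOrient F D ↔ ∀ i, FreeOrient F (restrictOrient D (B i)) := by
  simp only [FreeOrient, containsCopy_iff_exists_restrictOrient hB, not_exists]
  exact ⟨fun h i k T hT => h k T hT i, fun h k T hT i => h i k T hT⟩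

end Cover

/-- The cover of the vertices by `Sᶜ` and the sets `insert v Sᶜ` for `v ∈ S`. The set `Sᶜ`, indexed
by `none`, is listed separately so that the family is a cover also when `S` is empty. -/
def starCover (S : Set V) : Option S → Set V
  | none => Sᶜ
  | some v => insert v.1 Sᶜ

lemma compl_subset_starCover (S : Set V) : ∀ i, Sᶜ ⊆ starCover S i
  | none => subset_rfl
  | some v => Set.subset_insert v.1 Sᶜ

lemma starCover_inter_subset_compl {S : Set V} {i j : Option S} (hij : i ≠ j) :
    starCover S i ∩ starCover S j ⊆ Sᶜ := by
  rintro x ⟨hi, hj⟩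
  cases i with
  | none => exact hi
  | some v =>
    cases j with
    | none => exact hj
    | some w =>
      rcases hi with rfl | hi
      · exact hj.resolve_left fun h => hij (congrArg some (Subtype.ext h))
      · exact hi

section IndependentSet

variable {G : SimpleGraph V} {S : Set V}

lemma exists_subset_starCover_of_isClique (hS : S.Pairwise fun u v => ¬ G.Adj u v) (s : Set V)
    (hs : G.IsClique s) : ∃ i, s ⊆ starCover S i := by
  by_cases h : s ⊆ Sᶜ
  · exact ⟨none, h⟩
  · obtain ⟨v, hvs, hvS⟩ := Set.not_subset.1 h
    rw [Set.notMem_compl_iff] at hvS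
    refine ⟨some ⟨v, hvS⟩, fun x hx => ?_⟩
    by_cases hxv : x = v
    · exact Or.inl hxv
    · exact Or.inr fun hxS => hS hxS hvS hxv (hs hx hvs hxv)

lemma exists_mem_starCover_of_adj (hS : S.Pairwise fun u v => ¬ G.Adj u v) (u v : V)
    (huv : G.Adj u v) : ∃ i, u ∈ starCover S i ∧ v ∈ starCover S i := by
  obtain ⟨i, hi⟩ := exists_subset_starCover_of_isClique hS {u, v}
    (SimpleGraph.isClique_pair.2 fun _ => huv)
  exact ⟨i, Set.pair_subset_iff.1 hi⟩

lemma existsUnique_restrictOrient_eq_of_extends (hS : S.Pairwise fun u v => ¬ G.Adj u v)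
    (H : (G.induce Sᶜ).Orient) (f : ∀ v : S, (G.induce (insert v.1 Sᶜ)).Orient)
    (hf : ∀ (v : S) (a b : V) (ha : a ∈ Sᶜ) (hb : b ∈ Sᶜ),
      (f v).1 ⟨a, Set.mem_insert_of_mem v.1 ha⟩ ⟨b, Set.mem_insert_of_mem v.1 hb⟩ ↔
        H.1 ⟨a, ha⟩ ⟨b, hb⟩) :
    ∃! D : G.Orient, restrictOrient D Sᶜ = H ∧
      ∀ v : S, restrictOrient D (insert v.1 Sᶜ) = f v := by
  let g : ∀ i, (G.induce (starCover S i)).Orient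
    | none => H
    | some v => f v
  have hgH : ∀ i a b (ha : a ∈ Sᶜ) (hb : b ∈ Sᶜ),
      (g i).1 ⟨a, compl_subset_starCover S i ha⟩ ⟨b, compl_subset_starCover S i hb⟩ ↔
        H.1 ⟨a, ha⟩ ⟨b, hb⟩
    | none => fun _ _ _ _ => Iff.rfl
    | some v => hf v
  have hg : ∀ i j a b (hai : a ∈ starCover S i) (hbi : b ∈ starCover S i)
      (haj : a ∈ starCover S j) (hbj : b ∈ starCover S j),
      (g i).1 ⟨a, hai⟩ ⟨b, hbi⟩ ↔ (g j).1 ⟨a, haj⟩ ⟨b, hbj⟩ := by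
    intro i j a b hai hbi haj hbj
    obtain rfl | hij := eq_or_ne i j
    · rfl
    · have ha := starCover_inter_subset_compl hij ⟨hai, haj⟩
      have hb := starCover_inter_subset_compl hij ⟨hbi, hbj⟩
      exact (hgH i a b ha hb).trans (hgH j a b ha hb).symm
  have hcover := exists_mem_starCover_of_adj hS
  obtain ⟨D, hD⟩ := exists_forall_restrictOrient_eq hcover g hg
  refine ⟨D, Option.forall.1 hD, fun E hE => ?_⟩
  have hEg : ∀ i, restrictOrient E (starCover S i) = g i := Option.forall.2 hE
  exact eq_of_forall_restrictOrient_eq hcover fun i => (hEg i).trans (hD i).symm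

lemma freeOrient_iff_restrictOrient_compl_and_insert (hS : S.Pairwise fun u v => ¬ G.Adj u v)
    {F : TournFamily} {D : G.Orient} :
    FreeOrient F D ↔ FreeOrient F (restrictOrient D Sᶜ) ∧
      ∀ v : S, FreeOrient F (restrictOrient D (insert v.1 Sᶜ)) :=
  (freeOrient_iff_forall_restrictOrient (exists_subset_starCover_of_isClique hS)).trans
    Option.forall

end IndependentSet

theorem extFull_eq_prod_extVert_general (G : SimpleGraph V) (F : TournFamily) (S : Finset V)
    (hS : (↑S : Set V).Pairwise fun u v => ¬ G.Adj u v)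
    (H : (G.induce (↑S : Set V)ᶜ).Orient) (hH : FreeOrient F H) :
    extFull G F (↑S : Set V)ᶜ H = ∏ v ∈ S, extVert G F (↑S : Set V)ᶜ v H := by
  have hfree {D : G.Orient} := freeOrient_iff_restrictOrient_compl_and_insert hS (F := F) (D := D)
  rw [← Finset.prod_coe_sort]
  unfold extFull extVert
  rw [← Nat.card_pi]
  refine Nat.card_eq_of_bijective
    (fun D v => ⟨restrictOrient D.1 _, (hfree.1 D.2.1).2 v, D.2.2⟩)
    ((Function.bijective_iff_existsUnique _).2 fun f => ?_)
  obtain ⟨D, ⟨hDH, hDf⟩, hD_unique⟩ := existsUnique_restrictOrient_eq_of_extends hS H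
    (fun v => (f v).1) fun v => (f v).2.2
  have hD_free : FreeOrient F D := hfree.2 ⟨hDH ▸ hH, fun v => hDf v ▸ (f v).2.1⟩
  refine ⟨⟨D, hD_free, restrictOrient_eq_iff.1 hDH⟩, funext fun v => Subtype.ext (hDf v), ?_⟩
  rintro E rfl
  exact Subtype.ext (hD_unique E.1 ⟨restrictOrient_eq_iff.2 E.2.2, fun _ => rfl⟩)

/-- If `F` is a family of tournaments, `H` is the subgraph of `G` induced on the
complement of an independent set `S`, and `H⃗` is an `F`-free orientation of `H`, then
the number of `F`-free orientations of `G` extending `H⃗` is `∏_{v ∈ S} c_F(v, H⃗)`. -/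
theorem extFull_eq_prod_extVert {n : ℕ} (G : SimpleGraph (Fin n)) (F : TournFamily)
    (S : Finset (Fin n)) (hS : (↑S : Set (Fin n)).Pairwise fun u v => ¬ G.Adj u v)
    (H : (G.induce (↑S : Set (Fin n))ᶜ).Orient) (hH : FreeOrient F H) :
    extFull G F (↑S : Set (Fin n))ᶜ H = ∏ v ∈ S, extVert G F (↑S : Set (Fin n))ᶜ v H :=
  extFull_eq_prod_extVert_general G F S hS H hH
end
end
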